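/- Let $a$ and $b$ be coprime odd positive integers with $1 < a < b$. Then the equation $a^x + b^y = 2^z$ has at most one solution in positive integers $(x,y,z)$, except that for $(a,b) = (3,5)$ there are exactly three solutions and for $(a,b) = (3,13)$ there are exactly two solutions. -/

import Mathlib

/-- Unscaled coefficients: `(√X + √(-Y))^(2j+1) = C_j √X + E_j √(-Y)`. -/
def ce (X Y : ℤ) : ℕ → ℤ × ℤ
  | 0 => (1, 1)
  | j + 1 => ((X - Y) * (ce X Y j).1 - 2 * Y * (ce X Y j).2,
              (X - Y) * (ce X Y j).2 + 2 * X * (ce X Y j).1)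

theorem ce_zero (X Y : ℤ) : ce X Y 0 = (1, 1) := rfl

theorem ce_succ1 (X Y : ℤ) (j : ℕ) :
    (ce X Y (j+1)).1 = (X - Y) * (ce X Y j).1 - 2 * Y * (ce X Y j).2 := rfl

theorem ce_succ2 (X Y : ℤ) (j : ℕ) :
    (ce X Y (j+1)).2 = (X - Y) * (ce X Y j).2 + 2 * X * (ce X Y j).1 := rfl

theorem ce_norm (X Y : ℤ) (j : ℕ) :
    (ce X Y j).1 ^ 2 * X + (ce X Y j).2 ^ 2 * Y = (X + Y) ^ (2 * j + 1) := by
  induction j with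
  | zero => simp [ce_zero]
  | succ j ih =>
    rw [ce_succ1, ce_succ2, show 2 * (j+1) + 1 = (2 * j + 1) + 2 by ring, pow_add, ← ih]
    ring

theorem ce_swap (X Y : ℤ) (j : ℕ) :
    (ce Y X j).1 = (-1) ^ j * (ce X Y j).2 ∧ (ce Y X j).2 = (-1) ^ j * (ce X Y j).1 := by
  induction j with
  | zero => simp [ce_zero]
  | succ j ih =>
    rw [ce_succ1, ce_succ2, ce_succ1, ce_succ2, ih.1, ih.2]
    constructor <;> ring

theorem ce_add (X Y : ℤ) (i : ℕ) : ∀ j : ℕ,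
    (ce X Y (2 * i + 1 + j)).1 = ((ce X Y i).1 ^ 2 * X - (ce X Y i).2 ^ 2 * Y) * (ce X Y j).1
      - 2 * Y * (ce X Y i).1 * (ce X Y i).2 * (ce X Y j).2 ∧
    (ce X Y (2 * i + 1 + j)).2 = ((ce X Y i).1 ^ 2 * X - (ce X Y i).2 ^ 2 * Y) * (ce X Y j).2
      + 2 * X * (ce X Y i).1 * (ce X Y i).2 * (ce X Y j).1 := by
  induction i with
  | zero =>
    intro j
    rw [show 2 * 0 + 1 + j = j + 1 by ring, ce_succ1, ce_succ2]
    simp [ce_zero]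
  | succ i ih =>
    intro j
    have h := ih (j + 1 + 1)
    rw [show 2 * (i+1) + 1 + j = 2 * i + 1 + (j + 1 + 1) by ring, h.1, h.2]
    simp only [ce_succ1, ce_succ2]
    constructor <;> ring

theorem ce_dvd (X Y : ℤ) (i r : ℕ) :
    (ce X Y i).1 ∣ (ce X Y (i + r * (2 * i + 1))).1 ∧
    (ce X Y i).2 ∣ (ce X Y (i + r * (2 * i + 1))).2 := by
  induction r with
  | zero => simp
  | succ r ih =>
    rw [show i + (r+1) * (2 * i + 1) = 2 * i + 1 + (i + r * (2 * i + 1)) by ring,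
      (ce_add X Y i _).1, (ce_add X Y i _).2]
    obtain ⟨⟨c, hc⟩, ⟨e, he⟩⟩ := ih
    rw [hc, he]
    exact ⟨⟨((ce X Y i).1 ^ 2 * X - (ce X Y i).2 ^ 2 * Y) * c
      - 2 * Y * (ce X Y i).2 * ((ce X Y i).2 * e), by ring⟩,
      ⟨((ce X Y i).1 ^ 2 * X - (ce X Y i).2 ^ 2 * Y) * e
      + 2 * X * (ce X Y i).1 * ((ce X Y i).1 * c), by ring⟩⟩

/-- 2-adic structure. -/
theorem ce_two (X Y : ℤ) (w : ℕ) (hw : 1 ≤ w) (hX : Odd X) (h : X + Y = 2 ^ (w + 2)) (j : ℕ) :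
    ∃ C E : ℤ, (ce X Y j).1 = 4 ^ j * C ∧ (ce X Y j).2 = 4 ^ j * E ∧ Odd C ∧ Odd E ∧
      (4:ℤ) ∣ C - E := by
  obtain ⟨v, rfl⟩ : ∃ v, w = v + 1 := ⟨w - 1, by omega⟩
  obtain ⟨t, ht⟩ : ∃ t : ℤ, t = 2 ^ v := ⟨_, rfl⟩
  have hY : Y = 8 * t - X := by
    rw [ht]; rw [show v + 1 + 2 = v + 3 by ring, pow_add] at h; linarith
  subst hY
  induction j with
  | zero => exact ⟨1, 1, by simp [ce_zero]⟩
  | succ j ih =>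
    obtain ⟨C, E, hC, hE, hCo, hEo, f, hf⟩ := ih
    have hCf : C = E + 4 * f := by linarith
    refine ⟨X * E + 2 * X * f - 2 * t * C - 4 * t * E, X * E - 2 * t * E + 2 * X * f,
      ?_, ?_, ?_, ?_, ?_⟩
    · rw [ce_succ1, hC, hE, pow_succ, hCf]; ring
    · rw [ce_succ2, hC, hE, pow_succ, hCf]; ring
    · obtain ⟨k, hk⟩ := hX.mul hEo
      exact ⟨k + X * f - t * C - 2 * t * E, by rw [hk]; ring⟩
    · obtain ⟨k, hk⟩ := hX.mul hEo
      exact ⟨k - t * E + X * f, by rw [hk]; ring⟩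
    · exact ⟨- t * (E + 2 * f), by rw [hCf]; ring⟩

/-- expansion modulo `X`. -/
theorem ce_mod (X Y : ℤ) (j : ℕ) :
    (∃ K, (ce X Y j).1 = (2 * j + 1) * (-Y) ^ j + X * K) ∧
      ∃ K, (ce X Y j).2 = (-Y) ^ j + X * K := by
  induction j with
  | zero => exact ⟨⟨0, by simp [ce_zero]⟩, ⟨0, by simp [ce_zero]⟩⟩
  | succ j ih =>
    obtain ⟨⟨K, hK⟩, ⟨L, hL⟩⟩ := ih
    rw [ce_succ1, ce_succ2, hK, hL]
    push_cast
    refine ⟨⟨(2 * j + 1) * (-Y) ^ j + X * K - Y * K - 2 * Y * L, ?_⟩,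
      ⟨(-Y) ^ j + X * L - Y * L + 2 * ((2 * j + 1) * (-Y) ^ j + X * K), ?_⟩⟩ <;>
    · rw [pow_succ]; ring

/-- expansion modulo `X^2`. -/
theorem ce_mod2 (X y : ℤ) (j : ℕ) :
    (∃ K, 3 * y * (ce X (-y) j).1 =
        3 * (2 * j + 1) * y ^ (j + 1) + (2 * j + 1) * j * (2 * j - 1) * X * y ^ j + X ^ 2 * K) ∧
      ∃ K, y * (ce X (-y) j).2 = y ^ (j + 1) + (2 * j + 1) * j * X * y ^ j + X ^ 2 * K := by
  induction j with
  | zero => exact ⟨⟨0, by simp [ce_zero]⟩, ⟨0, by simp [ce_zero]⟩⟩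
  | succ j ih =>
    obtain ⟨⟨K, hK⟩, ⟨L, hL⟩⟩ := ih
    obtain ⟨⟨M, hM⟩, -⟩ := ce_mod X (-y) j
    rw [neg_neg] at hM
    push_cast
    refine ⟨⟨(2 * j + 1) * j * (2 * j - 1) * y ^ j + (X + y) * K
      + 6 * y * L, ?_⟩, ⟨(2 * j + 1) * j * y ^ j + (X + y) * L + 2 * y * M, ?_⟩⟩
    · rw [ce_succ1]
      linear_combination (X + y) * hK + 6 * y * hL
    · rw [ce_succ2]
      linear_combination (X + y) * hL + 2 * X * y * hM

theorem side (X Y C : ℤ) (i : ℕ) (hq : (2 * i + 1).Prime)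
    (hcop : IsCoprime X Y) (hC : (ce X Y i).1 = 4 ^ i * C) (hCo : Odd C)
    (hg : ∀ p : ℕ, p.Prime → p ≠ 2 → (p:ℤ) ∣ (ce X Y i).1 → (p:ℤ) ∣ X) :
    ∃ α : ℕ, C.natAbs = (2 * i + 1) ^ α ∧ (0 < α → ((2 * i + 1 : ℕ) : ℤ) ∣ X) ∧
      (5 ≤ 2 * i + 1 → α ≤ 1) := by
  have hC0 : C.natAbs ≠ 0 := by
    intro h
    rw [Int.natAbs_eq_zero] at h
    rw [h] at hCo
    exact absurd hCo (by decide)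
  have hpX : ∀ p : ℕ, p.Prime → (p:ℤ) ∣ C → (p:ℤ) ∣ X := by
    intro p hp hpC
    apply hg p hp
    · rintro rfl
      obtain ⟨k, hk⟩ := hCo
      push_cast at hpC
      omega
    · rw [hC]; exact hpC.mul_left _
  have huniq : ∀ {p : ℕ}, p.Prime → p ∣ C.natAbs → p = 2 * i + 1 := by
    intro p hp hpC
    have hpC' : (p:ℤ) ∣ C := Int.natCast_dvd.mpr hpC
    have hX := hpX p hp hpC'
    obtain ⟨⟨K, hK⟩, -⟩ := ce_mod X Y i
    have h1 : (p:ℤ) ∣ (2 * i + 1) * (-Y) ^ i := by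
      have : (2 * i + 1) * (-Y) ^ i = 4 ^ i * C - X * K := by rw [← hC, hK]; ring
      rw [this]
      exact dvd_sub (hpC'.mul_left _) (hX.mul_right _)
    have hpp : Prime (p:ℤ) := Nat.prime_iff_prime_int.mp hp
    rcases hpp.dvd_or_dvd h1 with h2 | h2
    · have h3 : p ∣ 2 * i + 1 := by exact_mod_cast h2
      exact (Nat.prime_dvd_prime_iff_eq hp hq).mp h3
    · have h3 := hpp.dvd_of_dvd_pow h2
      rw [dvd_neg] at h3
      exact absurd (hcop.isUnit_of_dvd' hX h3) hpp.not_isUnit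
  refine ⟨_, Nat.eq_prime_pow_of_unique_prime_dvd hC0 huniq, ?_, ?_⟩
  · intro h
    have hlen := Nat.eq_prime_pow_of_unique_prime_dvd hC0 huniq
    apply hpX _ hq
    rw [Int.natCast_dvd, hlen]
    exact dvd_pow_self _ (by omega)
  · intro h5
    by_contra hlt
    have hlen := Nat.eq_prime_pow_of_unique_prime_dvd hC0 huniq
    have hqC2 : (((2 * i + 1 : ℕ) : ℤ)) ^ 2 ∣ C := by
      rw [← Int.natCast_pow, Int.natCast_dvd, hlen]
      exact pow_dvd_pow _ (by omega)
    have hqX : ((2 * i + 1 : ℕ) : ℤ) ∣ X := hpX _ hq ((dvd_pow_self _ (by norm_num)).trans hqC2)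
    obtain ⟨⟨K, hK⟩, -⟩ := ce_mod2 X (-Y) i
    rw [neg_neg, hC] at hK
    obtain ⟨c, hc⟩ := hqC2
    obtain ⟨x, hx⟩ := hqX
    have hpp : Prime ((2 * i + 1 : ℕ) : ℤ) := Nat.prime_iff_prime_int.mp hq
    set q : ℤ := ((2 * i + 1 : ℕ) : ℤ) with hqdef
    have hq' : (2 * i + 1 : ℤ) = q := by rw [hqdef]; push_cast; ring
    have h1 : q * q ∣ q * (3 * (-Y) ^ (i + 1)) := by
      refine ⟨3 * (-Y) * 4 ^ i * c - i * (2 * i - 1) * x * (-Y) ^ i - x ^ 2 * K, ?_⟩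
      rw [hq'] at hK
      rw [hc, hx] at hK
      linear_combination (-1) * hK
    have h2 := (mul_dvd_mul_iff_left hpp.ne_zero).mp h1
    rcases hpp.dvd_or_dvd h2 with h3 | h3
    · have h4 : 2 * i + 1 ∣ 3 := by rw [hqdef] at h3; exact_mod_cast h3
      have := Nat.le_of_dvd (by norm_num) h4
      omega
    · have h3 := hpp.dvd_of_dvd_pow h3
      rw [dvd_neg] at h3
      exact absurd (hcop.isUnit_of_dvd' ⟨x, hx⟩ h3) hpp.not_isUnit

theorem three_pow_mod8 (α : ℕ) : (3:ℤ) ^ α % 8 = 1 ∨ (3:ℤ) ^ α % 8 = 3 := by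
  induction α with
  | zero => simp
  | succ n ih => rw [pow_succ]; omega

theorem pow_eq_a (w α : ℕ) (hw : 1 ≤ w) (h : (2:ℤ) ^ (w+1) - 1 = 3 ^ α) : w = 1 := by
  by_contra hne
  obtain ⟨v, rfl⟩ : ∃ v, w = v + 2 := ⟨w - 2, by omega⟩
  have := three_pow_mod8 α
  rw [show v + 2 + 1 = v + 3 by ring, pow_add] at h
  omega

theorem pow_eq_b (w α : ℕ) (hw : 1 ≤ w) (h : (2:ℤ) ^ (w+1) + 1 = 3 ^ α) : w = 2 := by
  have hN : 2 ^ (w+1) + 1 = 3 ^ α := by exact_mod_cast h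
  have hev : Even α := by
    by_contra ho
    rw [Nat.not_even_iff_odd] at ho
    obtain ⟨k, rfl⟩ := ho
    have h9 : 9 ^ k % 4 = 1 := by simp [Nat.pow_mod]
    rw [pow_succ 3, pow_mul] at hN
    obtain ⟨v, rfl⟩ : ∃ v, w = v + 1 := ⟨w - 1, by omega⟩
    rw [show v + 1 + 1 = v + 2 by ring, pow_add] at hN
    norm_num at hN
    omega
  obtain ⟨k, rfl⟩ := hev
  have h1 : 1 ≤ 3 ^ k := Nat.one_le_pow _ _ (by norm_num)
  obtain ⟨d, hd⟩ : ∃ d, 3 ^ k = d + 1 := ⟨3 ^ k - 1, by omega⟩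
  rw [pow_add 3, hd] at hN
  have hN' : d * (d + 2) = 2 ^ (w+1) := by nlinarith
  obtain ⟨r, hr, hr'⟩ := (Nat.dvd_prime_pow Nat.prime_two).mp (Dvd.intro _ hN')
  obtain ⟨s, hs, hs'⟩ := (Nat.dvd_prime_pow Nat.prime_two).mp (Dvd.intro_left _ hN')
  have hr1 : r = 1 := by
    rcases Nat.lt_or_ge r 2 with h2 | h2
    · interval_cases r
      · simp at hr'
        rw [hr'] at hs'
        have : s ≠ 0 := by rintro rfl; norm_num at hs'
        obtain ⟨t, rfl⟩ : ∃ t, s = t + 1 := ⟨s - 1, by omega⟩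
        rw [pow_succ] at hs'; omega
      · rfl
    · have hs2 : 2 ≤ s := by
        by_contra hlt
        have : 2 ^ 2 ≤ 2 ^ r := Nat.pow_le_pow_right (by norm_num) h2
        have : s = 0 ∨ s = 1 := by omega
        rcases this with rfl | rfl <;> norm_num at hs' <;> omega
      obtain ⟨r', rfl⟩ : ∃ t, r = t + 2 := ⟨r - 2, by omega⟩
      obtain ⟨s', rfl⟩ : ∃ t, s = t + 2 := ⟨s - 2, by omega⟩
      rw [pow_add] at hr' hs'
      omega
  rw [hr1] at hr'
  norm_num at hr'
  rw [hr'] at hN'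
  have : (2:ℕ) ^ 3 = 2 ^ (w+1) := by rw [← hN']; norm_num
  have := Nat.pow_right_injective (le_refl 2) this
  omega

theorem three_case (X Y C E : ℤ) (w α : ℕ) (hw : 1 ≤ w) (h : X + Y = 2 ^ (w + 2))
    (hC : X - 3 * Y = 4 * C) (hE : 3 * X - Y = 4 * E)
    (hE1 : E.natAbs = 1) (hC1 : C.natAbs = 3 ^ α) (hX : 0 < X) :
    (X = 3 ∧ Y = 5 ∧ w = 1) ∨ (X = 3 ∧ Y = 13 ∧ w = 2) := by
  have hC2 : C = 3 ^ α ∨ C = - 3 ^ α := by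
    rcases Int.natAbs_eq C with h1 | h1 <;> rw [hC1] at h1 <;> push_cast at h1 <;> tauto
  have hE2 : E = 1 ∨ E = -1 := by omega
  have h2 : (1:ℤ) ≤ 2 ^ w := one_le_pow₀ (by norm_num)
  have h3 : (1:ℤ) ≤ 3 ^ α := one_le_pow₀ (by norm_num)
  have h4 : (2:ℤ) ^ (w+2) = 4 * 2 ^ w := by rw [pow_add]; ring
  have h5 : (2:ℤ) ^ (w+1) = 2 * 2 ^ w := by rw [pow_add]; ring
  rcases hE2 with rfl | rfl
  · left
    have : w = 1 := by
      apply pow_eq_a w α hw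
      rcases hC2 with h6 | h6 <;> rw [h5] <;> linarith
    subst this
    norm_num at h4 h
    refine ⟨by linarith, by linarith, rfl⟩
  · right
    have : w = 2 := by
      apply pow_eq_b w α hw
      rcases hC2 with h6 | h6 <;> rw [h5] <;> linarith
    subst this
    norm_num at h4 h
    refine ⟨by linarith, by linarith, rfl⟩

def Good (X Y : ℤ) (j : ℕ) : Prop :=
  ∀ p : ℕ, p.Prime → p ≠ 2 → ((p:ℤ) ∣ (ce X Y j).1 → (p:ℤ) ∣ X) ∧
    ((p:ℤ) ∣ (ce X Y j).2 → (p:ℤ) ∣ Y)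

theorem pow_bound (q : ℕ) (hq : 7 ≤ q) : q ^ 2 < 2 ^ (q - 1) := by
  induction q, hq using Nat.le_induction with
  | base => norm_num
  | succ n hn ih =>
    obtain ⟨k, rfl⟩ : ∃ k, n = k + 1 := ⟨n - 1, by omega⟩
    simp only [Nat.add_sub_cancel] at *
    rw [pow_succ 2 k]
    nlinarith

theorem key_prime (X Y : ℤ) (w i : ℕ) (hw : 1 ≤ w) (hX : Odd X) (hX0 : 0 < X) (hY0 : 0 < Y)
    (hcop : IsCoprime X Y) (h : X + Y = 2 ^ (w + 2)) (hq : (2 * i + 1).Prime)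
    (hg : Good X Y i) :
    (((X = 3 ∧ Y = 5) ∨ (X = 5 ∧ Y = 3)) ∧ w = 1 ∧ (i = 1 ∨ i = 2)) ∨
    (((X = 3 ∧ Y = 13) ∨ (X = 13 ∧ Y = 3)) ∧ w = 2 ∧ i = 1) := by
  obtain ⟨C, E, hC, hE, hCo, hEo, -⟩ := ce_two X Y w hw hX h i
  obtain ⟨α, hα, hα1, hα2⟩ := side X Y C i hq hcop hC hCo (fun p hp h2 => (hg p hp h2).1)
  have hsw := ce_swap X Y i
  obtain ⟨β, hβ, hβ1, hβ2⟩ := side Y X ((-1) ^ i * E) i hq hcop.symm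
    (by rw [hsw.1, hE]; ring) (by
      rcases neg_one_pow_eq_or ℤ i with h1 | h1 <;> rw [h1]
      · simpa using hEo
      · simpa using hEo.neg) (fun p hp h2 hd => (hg p hp h2).2 (by
        rw [hsw.1] at hd
        rcases neg_one_pow_eq_or ℤ i with h1 | h1 <;> rw [h1] at hd <;> simpa using hd))
  have hβ' : E.natAbs = (2 * i + 1) ^ β := by
    rw [← hβ]
    rcases neg_one_pow_eq_or ℤ i with h1 | h1 <;> rw [h1] <;> simp
  have hnot : α = 0 ∨ β = 0 := by
    by_contra hh
    push Not at hh
    have h1 := hα1 (Nat.pos_of_ne_zero hh.1)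
    have h2 := hβ1 (Nat.pos_of_ne_zero hh.2)
    exact (Nat.prime_iff_prime_int.mp hq).not_isUnit (hcop.isUnit_of_dvd' h1 h2)
  have hq2 := hq.two_le
  have hi1 : 1 ≤ i := by omega
  by_cases h5 : 5 ≤ 2 * i + 1
  · have hα3 := hα2 h5
    have hβ3 := hβ2 h5
    have hnorm := ce_norm X Y i
    rw [hC, hE, h] at hnorm
    have hnorm2 : C ^ 2 * X + E ^ 2 * Y = 2 ^ (w * (2 * i)) * (X + Y) := by
      have h4 : ((4:ℤ) ^ i) ^ 2 ≠ 0 := by positivity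
      apply mul_left_cancel₀ h4
      rw [h]
      have h16 : ((4:ℤ) ^ i) ^ 2 = 2 ^ (4 * i) := by
        rw [← pow_mul, show (4:ℤ) = 2 ^ 2 by norm_num, ← pow_mul]; congr 1; ring
      rw [show ((4:ℤ) ^ i) ^ 2 * (2 ^ (w * (2 * i)) * 2 ^ (w + 2)) = (2 ^ (w+2)) ^ (2 * i + 1) by
        rw [h16, ← pow_mul, ← pow_add, ← pow_add]; congr 1; ring]
      rw [← hnorm]; ring
    have hC2 : ∀ (T : ℤ) (γ : ℕ), T.natAbs = (2 * i + 1) ^ γ → T ^ 2 = ((2 * i + 1 : ℤ) ^ γ) ^ 2 := by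
      intro T γ hT
      rw [← Int.natAbs_sq T, hT]; push_cast; ring
    have e1 := hC2 C α hα
    have e2 := hC2 E β hβ'
    have hb : ∀ γ : ℕ, γ ≤ 1 → ((2 * i + 1 : ℤ) ^ γ) ^ 2 ≤ (2 * i + 1 : ℤ) ^ 2 := by
      intro γ hγ
      interval_cases γ
      · simp only [pow_zero, one_pow]; nlinarith
      · simp
    have hle : (2:ℤ) ^ (w * (2 * i)) * (X + Y) ≤ (2 * i + 1 : ℤ) ^ 2 * (X + Y) := by
      rw [← hnorm2, e1, e2]
      nlinarith [hb α hα3, hb β hβ3]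
    have hle2 : (2:ℤ) ^ (w * (2 * i)) ≤ (2 * i + 1 : ℤ) ^ 2 :=
      le_of_mul_le_mul_right hle (by linarith)
    have hle3 : 2 ^ (w * (2 * i)) ≤ (2 * i + 1) ^ 2 := by exact_mod_cast hle2
    have hi2 : i = 2 := by
      by_contra hne
      have h7 := pow_bound (2 * i + 1) (by omega)
      have : 2 ^ (2 * i + 1 - 1) ≤ 2 ^ (w * (2 * i)) :=
        Nat.pow_le_pow_right (by norm_num) (by rw [Nat.add_sub_cancel]; nlinarith)
      omega
    subst hi2
    have hw1 : w = 1 := by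
      by_contra hne
      have : 2 ^ 8 ≤ 2 ^ (w * (2 * 2)) := Nat.pow_le_pow_right (by norm_num) (by omega)
      norm_num at hle3 this
      omega
    subst hw1
    left
    norm_num at h
    have hXle : X < 8 := by linarith
    have hY : Y = 8 - X := by linarith
    subst hY
    refine ⟨?_, rfl, Or.inr rfl⟩
    by_cases h35 : X = 3 ∨ X = 5
    · rcases h35 with rfl | rfl <;> simp
    · exfalso
      have hXX : X = 1 ∨ X = 7 := by
        obtain ⟨k, hk⟩ := hX
        omega
      have hα0 : α = 0 := by
        by_contra hne
        have := hα1 (Nat.pos_of_ne_zero hne)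
        rcases hXX with rfl | rfl <;> norm_num at this
      have hβ0 : β = 0 := by
        by_contra hne
        have := hβ1 (Nat.pos_of_ne_zero hne)
        rcases hXX with rfl | rfl <;> norm_num at this
      rw [e1, e2, hα0, hβ0] at hnorm2
      norm_num at hnorm2
  · have hi : i = 1 := by omega
    subst hi
    have c1 : X - 3 * Y = 4 * C := by
      have := hC; rw [show (1:ℕ) = 0 + 1 from rfl, ce_succ1] at this
      simp only [ce_zero] at this; norm_num at this; linarith
    have c2 : 3 * X - Y = 4 * E := by
      have := hE; rw [show (1:ℕ) = 0 + 1 from rfl, ce_succ2] at this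
      simp only [ce_zero] at this; norm_num at this; linarith
    norm_num at hα hβ'
    rcases hnot with h0 | h0
    · rw [h0] at hα
      have := three_case Y X (-E) (-C) w β hw (by linarith) (by linarith) (by linarith)
        (by simpa using hα) (by simpa using hβ') hY0
      rcases this with ⟨rfl, rfl, rfl⟩ | ⟨rfl, rfl, rfl⟩
      · exact Or.inl ⟨Or.inr ⟨rfl, rfl⟩, rfl, Or.inl rfl⟩
      · exact Or.inr ⟨Or.inr ⟨rfl, rfl⟩, rfl, rfl⟩
    · rw [h0] at hβ'
      have := three_case X Y C E w α hw h c1 c2 (by simpa using hβ') hα hX0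
      rcases this with ⟨rfl, rfl, rfl⟩ | ⟨rfl, rfl, rfl⟩
      · exact Or.inl ⟨Or.inl ⟨rfl, rfl⟩, rfl, Or.inl rfl⟩
      · exact Or.inr ⟨Or.inl ⟨rfl, rfl⟩, rfl, rfl⟩

theorem Good.of_mul {X Y : ℤ} {i r : ℕ} (h : Good X Y (i + r * (2 * i + 1))) : Good X Y i :=
  fun p hp h2 => ⟨fun hd => (h p hp h2).1 (hd.trans (ce_dvd X Y i r).1),
    fun hd => (h p hp h2).2 (hd.trans (ce_dvd X Y i r).2)⟩

theorem bad_of {X Y : ℤ} {j : ℕ} (p : ℕ) (hp : p.Prime) (h2 : p ≠ 2)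
    (h : ((p:ℤ) ∣ (ce X Y j).1 ∧ ¬ (p:ℤ) ∣ X) ∨ ((p:ℤ) ∣ (ce X Y j).2 ∧ ¬ (p:ℤ) ∣ Y)) :
    ¬ Good X Y j := by
  intro hg
  rcases h with ⟨h3, h4⟩ | ⟨h3, h4⟩
  · exact h4 ((hg p hp h2).1 h3)
  · exact h4 ((hg p hp h2).2 h3)

theorem exists_prime_split (j : ℕ) (hj : 1 ≤ j) :
    ∃ i r, (2 * i + 1).Prime ∧ j = i + r * (2 * i + 1) := by
  have hq := Nat.minFac_prime (show 2 * j + 1 ≠ 1 by omega)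
  obtain ⟨s, hs⟩ := Nat.minFac_dvd (2 * j + 1)
  have hodd : Odd (Nat.minFac (2 * j + 1) * s) := by rw [← hs]; exact ⟨j, rfl⟩
  rw [Nat.odd_mul] at hodd
  obtain ⟨⟨i, hi⟩, ⟨r, hr⟩⟩ := hodd
  rw [hi] at hs hq
  refine ⟨i, r, hq, ?_⟩
  rw [hr] at hs
  nlinarith

theorem key_full (X Y : ℤ) (w j : ℕ) (hw : 1 ≤ w) (hX : Odd X) (hX0 : 0 < X) (hY0 : 0 < Y)
    (hcop : IsCoprime X Y) (h : X + Y = 2 ^ (w + 2)) (hj : 1 ≤ j)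
    (hg : Good X Y j) :
    (((X = 3 ∧ Y = 5) ∨ (X = 5 ∧ Y = 3)) ∧ w = 1 ∧ (j = 1 ∨ j = 2)) ∨
    (((X = 3 ∧ Y = 13) ∨ (X = 13 ∧ Y = 3)) ∧ w = 2 ∧ j = 1) := by
  obtain ⟨i, r, hq, hjr⟩ := exists_prime_split j hj
  have hgi : Good X Y i := by rw [hjr] at hg; exact hg.of_mul
  have hk := key_prime X Y w i hw hX hX0 hY0 hcop h hq hgi
  rcases Nat.eq_zero_or_pos r with hr | hr
  · have : j = i := by rw [hjr, hr]; ring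
    rw [this]; exact hk
  exfalso
  obtain ⟨i', r', hq', hjr'⟩ := exists_prime_split r hr
  have hg2 : Good X Y (i + i' * (2 * i + 1)) := by
    have : j = (i + i' * (2 * i + 1)) + r' * (2 * (i + i' * (2 * i + 1)) + 1) := by
      rw [hjr, hjr']; ring
    rw [this] at hg; exact hg.of_mul
  have hgi' : Good X Y i' := by
    have : i + i' * (2 * i + 1) = i' + i * (2 * i' + 1) := by ring
    rw [this] at hg2; exact hg2.of_mul
  have hk' := key_prime X Y w i' hw hX hX0 hY0 hcop h hq' hgi'
  have b1 : ¬ Good 3 5 4 := bad_of 19 (by norm_num) (by norm_num) (by decide)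
  have b2 : ¬ Good 5 3 4 := bad_of 19 (by norm_num) (by norm_num) (by decide)
  have b3 : ¬ Good 3 5 7 := bad_of 29 (by norm_num) (by norm_num) (by decide)
  have b4 : ¬ Good 5 3 7 := bad_of 29 (by norm_num) (by norm_num) (by decide)
  have b5 : ¬ Good 3 5 12 := bad_of 149 (by norm_num) (by norm_num) (by decide)
  have b6 : ¬ Good 5 3 12 := bad_of 149 (by norm_num) (by norm_num) (by decide)
  have b7 : ¬ Good 3 13 4 := bad_of 17 (by norm_num) (by norm_num) (by decide)
  have b8 : ¬ Good 13 3 4 := bad_of 17 (by norm_num) (by norm_num) (by decide)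
  rcases hk with ⟨hXY, hw1, hi⟩ | ⟨hXY, hw2, hi⟩
  · rcases hk' with ⟨-, -, hi'⟩ | ⟨-, hw2, -⟩
    · rcases hXY with ⟨rfl, rfl⟩ | ⟨rfl, rfl⟩ <;> rcases hi with rfl | rfl <;>
        rcases hi' with rfl | rfl <;> norm_num at hg2 <;> contradiction
    · omega
  · rcases hk' with ⟨-, hw1, hi'⟩ | ⟨-, -, hi'⟩
    · omega
    · rcases hXY with ⟨rfl, rfl⟩ | ⟨rfl, rfl⟩ <;> subst hi <;> subst hi' <;>
        norm_num at hg2 <;> contradiction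

/-! ### Descent in the quadratic order -/

def Sol (D u v : ℤ) (w : ℕ) : Prop :=
  Odd u ∧ Odd v ∧ (4:ℤ) ∣ u - v ∧ u ^ 2 + D * v ^ 2 = 2 ^ (w + 2)

theorem Sol.neg {D u v : ℤ} {w : ℕ} (h : Sol D u v w) : Sol D (-u) (-v) w := by
  obtain ⟨h1, h2, h3, h4⟩ := h
  refine ⟨h1.neg, h2.neg, ?_, by linarith [neg_sq u, neg_sq v, h4]⟩
  obtain ⟨k, hk⟩ := h3
  exact ⟨-k, by linarith⟩

theorem step_core (D u1 v1 u2 v2 : ℤ) (w1 w2 : ℕ) (hle : w1 ≤ w2) (h1 : Sol D u1 v1 w1)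
    (h2 : Sol D u2 v2 w2) :
    ∃ u3 v3 : ℤ, u3 ^ 2 + D * v3 ^ 2 = 2 ^ (w2 - w1 + 2) ∧ 2 * u2 = u1 * u3 - D * v1 * v3 ∧
      2 * v2 = u1 * v3 + u3 * v1 := by
  obtain ⟨hu1, hv1, ho1, e1⟩ := h1
  obtain ⟨hu2, hv2, ho2, e2⟩ := h2
  obtain ⟨n, rfl⟩ : ∃ n, w2 = w1 + n := ⟨w2 - w1, by omega⟩
  have hodd : ∃ k : ℤ, u1 * v2 + u2 * v1 = 2 * (2 * k + 1) := by
    obtain ⟨f1, hf1⟩ := ho1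
    obtain ⟨f2, hf2⟩ := ho2
    obtain ⟨g, hg⟩ := hv1.mul hv2
    refine ⟨g + f1 * v2 + f2 * v1, ?_⟩
    rw [show u1 = v1 + 4 * f1 by linarith, show u2 = v2 + 4 * f2 by linarith]
    linear_combination 2 * hg
  obtain ⟨k, hk⟩ := hodd
  have hprod : (2:ℤ) ^ (w1 + 1) ∣ (u1 * v2 - u2 * v1) * (2 * k + 1) := by
    refine ⟨v2 ^ 2 - 2 ^ n * v1 ^ 2, ?_⟩
    have : (2:ℤ) * ((u1 * v2 - u2 * v1) * (2 * k + 1)) =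
        2 * (2 ^ (w1 + 1) * (v2 ^ 2 - 2 ^ n * v1 ^ 2)) := by
      have e1' : u1 ^ 2 + D * v1 ^ 2 = 2 * 2 ^ (w1 + 1) := by rw [e1]; ring
      have e2' : u2 ^ 2 + D * v2 ^ 2 = 2 * 2 ^ (w1 + 1) * 2 ^ n := by rw [e2]; ring
      linear_combination (-(u1 * v2 - u2 * v1)) * hk + v2 ^ 2 * e1' - v1 ^ 2 * e2'
    linarith
  have hcop : IsCoprime ((2:ℤ) ^ (w1 + 1)) (2 * k + 1) := by
    apply IsCoprime.pow_left
    exact ⟨-k, 1, by ring⟩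
  obtain ⟨v3, hv3⟩ := hcop.dvd_of_dvd_mul_right hprod
  have hN : (u1 * u2 + D * v1 * v2) ^ 2 + D * (u1 * v2 - u2 * v1) ^ 2
      = (2 ^ (w1 + 1)) ^ 2 * 2 ^ (n + 2) := by
    have : (u1 * u2 + D * v1 * v2) ^ 2 + D * (u1 * v2 - u2 * v1) ^ 2
      = (u1 ^ 2 + D * v1 ^ 2) * (u2 ^ 2 + D * v2 ^ 2) := by ring
    rw [this, e1, e2]; ring
  have hsq : ((2:ℤ) ^ (w1 + 1)) ^ 2 ∣ (u1 * u2 + D * v1 * v2) ^ 2 := by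
    refine ⟨2 ^ (n + 2) - D * v3 ^ 2, ?_⟩
    rw [hv3] at hN
    linear_combination hN
  obtain ⟨u3, hu3⟩ := (Int.pow_dvd_pow_iff (by norm_num)).mp hsq
  have hp : (2:ℤ) ^ (w1 + 1) ≠ 0 := by positivity
  refine ⟨u3, v3, ?_, ?_, ?_⟩
  · rw [hu3, hv3] at hN
    have hp2 : ((2:ℤ) ^ (w1 + 1)) ^ 2 ≠ 0 := by positivity
    apply mul_left_cancel₀ hp2
    rw [Nat.add_sub_cancel_left]
    linear_combination hN
  · apply mul_left_cancel₀ hp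
    have e1' : u1 ^ 2 + D * v1 ^ 2 = 2 * 2 ^ (w1 + 1) := by rw [e1]; ring
    linear_combination (-u2) * e1' + u1 * hu3 - D * v1 * hv3
  · apply mul_left_cancel₀ hp
    have e1' : u1 ^ 2 + D * v1 ^ 2 = 2 * 2 ^ (w1 + 1) := by rw [e1]; ring
    linear_combination (-v2) * e1' + u1 * hv3 + v1 * hu3

theorem step_lt (D u1 v1 u2 v2 : ℤ) (w1 w2 : ℕ) (hD : Odd D) (hle : w1 < w2) (h1 : Sol D u1 v1 w1)
    (h2 : Sol D u2 v2 w2) :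
    ∃ u3 v3 : ℤ, Sol D u3 v3 (w2 - w1) ∧ 2 * u2 = u1 * u3 - D * v1 * v3 ∧
      2 * v2 = u1 * v3 + u3 * v1 := by
  obtain ⟨u3, v3, e3, e4, e5⟩ := step_core D u1 v1 u2 v2 w1 w2 hle.le h1 h2
  refine ⟨u3, v3, ?_, e4, e5⟩
  obtain ⟨hu1, hv1, ⟨f1, hf1⟩, e1⟩ := h1
  obtain ⟨hu2, hv2, ho2, e2⟩ := h2
  obtain ⟨n, hn⟩ : ∃ n, w2 - w1 = n + 1 := ⟨w2 - w1 - 1, by omega⟩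
  have e3' : u3 ^ 2 + D * v3 ^ 2 = 8 * 2 ^ n := by rw [e3, hn]; ring
  have hu1' : u1 = v1 + 4 * f1 := by linarith
  have hpar : Even (u3 - v3) := by
    have : Even (u3 ^ 2 + D * v3 ^ 2) := ⟨4 * 2 ^ n, by rw [e3']; ring⟩
    rw [Int.even_add, Int.even_pow' (by norm_num), Int.even_mul, Int.even_pow' (by norm_num)] at this
    rw [Int.even_sub]
    have hD' := Int.not_even_iff_odd.mpr hD
    tauto
  have hvo : Odd v3 := by
    by_contra hve
    rw [Int.not_odd_iff_even] at hve
    obtain ⟨b, hb⟩ := hve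
    obtain ⟨c, hc⟩ := hpar
    have hu3 : u3 = 2 * (b + c) := by linarith
    have hv3 : v3 = 2 * b := by linarith
    -- b + c and b have the same parity
    have hce : Even c := by
      have h6 : (b + c) ^ 2 + D * b ^ 2 = 2 * 2 ^ n := by
        rw [hu3, hv3] at e3'
        linarith [e3', show (2 * (b + c)) ^ 2 + D * (2 * b) ^ 2 = 4 * ((b + c) ^ 2 + D * b ^ 2) by ring]
      have : Even ((b + c) ^ 2 + D * b ^ 2) := ⟨2 ^ n, by rw [h6]; ring⟩
      rw [Int.even_add, Int.even_pow' (by norm_num), Int.even_mul, Int.even_pow' (by norm_num), Int.even_add] at this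
      have hD' := Int.not_even_iff_odd.mpr hD
      tauto
    obtain ⟨d, hd⟩ := hce
    have : v2 = 2 * (b * v1 + 2 * f1 * b + d * v1) := by
      have : (2:ℤ) * v2 = 2 * (2 * (b * v1 + 2 * f1 * b + d * v1)) := by
        rw [e5, hu1', hu3, hv3, hd]; ring
      linarith
    obtain ⟨g, hg⟩ := hv2
    omega
  have huo : Odd u3 := by
    have := hpar.add_odd hvo
    simpa using this
  refine ⟨huo, hvo, ?_, e3⟩
  obtain ⟨c, hc⟩ := hpar
  have hu3 : u3 = v3 + 2 * c := by linarith
  have hv2' : v2 = v1 * v3 + 2 * f1 * v3 + c * v1 := by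
    have : (2:ℤ) * v2 = 2 * (v1 * v3 + 2 * f1 * v3 + c * v1) := by
      rw [e5, hu1', hu3]; ring
    linarith
  have hce : Even c := by
    by_contra hco
    rw [Int.not_even_iff_odd] at hco
    obtain ⟨g1, hg1⟩ := hv1.mul hvo
    obtain ⟨g2, hg2⟩ := hco.mul hv1
    obtain ⟨g3, hg3⟩ := hv2
    rw [hg1, hg2, mul_assoc] at hv2'
    omega
  obtain ⟨d, hd⟩ := hce
  exact ⟨d, by linarith⟩

theorem step_eq (D u1 v1 u2 v2 : ℤ) (w : ℕ) (hD : 5 ≤ D) (h1 : Sol D u1 v1 w)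
    (h2 : Sol D u2 v2 w) : (u2 = u1 ∧ v2 = v1) ∨ (u2 = -u1 ∧ v2 = -v1) := by
  obtain ⟨u3, v3, e3, e4, e5⟩ := step_core D u1 v1 u2 v2 w w le_rfl h1 h2
  rw [Nat.sub_self] at e3
  norm_num at e3
  have hv : v3 = 0 := by
    by_contra hne
    have : 1 ≤ v3 ^ 2 := by have := sq_pos_of_ne_zero hne; linarith
    nlinarith [sq_nonneg u3]
  rw [hv] at e3 e4 e5
  have : (u3 - 2) * (u3 + 2) = 0 := by linarith
  rcases mul_eq_zero.mp this with h | h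
  · left
    have : u3 = 2 := by linarith
    rw [this] at e4 e5
    constructor <;> linarith
  · right
    have : u3 = -2 := by linarith
    rw [this] at e4 e5
    constructor <;> linarith

/-- common root of two oriented elements -/
theorem euclid (D : ℤ) (hDo : Odd D) (hD : 5 ≤ D) : ∀ (N : ℕ) (u1 v1 u2 v2 : ℤ) (w1 w2 : ℕ),
    w1 + w2 ≤ N → 1 ≤ w1 → 1 ≤ w2 → Sol D u1 v1 w1 → Sol D u2 v2 w2 →
    ∃ (u0 v0 : ℤ) (w0 m n : ℕ) (σ τ : ℤ), Sol D u0 v0 w0 ∧ 1 ≤ w0 ∧ 1 ≤ m ∧ 1 ≤ n ∧ Nat.Coprime m n ∧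
      w1 = m * w0 ∧ w2 = n * w0 ∧ (σ = 1 ∨ σ = -1) ∧ (τ = 1 ∨ τ = -1) ∧
      2 * (⟨u0, v0⟩ : ℤ√(-D)) ^ m = (σ : ℤ√(-D)) * 2 ^ m * ⟨u1, v1⟩ ∧
      2 * (⟨u0, v0⟩ : ℤ√(-D)) ^ n = (τ : ℤ√(-D)) * 2 ^ n * ⟨u2, v2⟩ := by
  intro N
  induction N with
  | zero => intro u1 v1 u2 v2 w1 w2 h; omega
  | succ N ih =>
    have main : ∀ (u1 v1 u2 v2 : ℤ) (w1 w2 : ℕ), w1 < w2 →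
      w1 + w2 ≤ N + 1 → 1 ≤ w1 → 1 ≤ w2 → Sol D u1 v1 w1 → Sol D u2 v2 w2 →
      ∃ (u0 v0 : ℤ) (w0 m n : ℕ) (σ τ : ℤ), Sol D u0 v0 w0 ∧ 1 ≤ w0 ∧ 1 ≤ m ∧ 1 ≤ n ∧ Nat.Coprime m n ∧
      w1 = m * w0 ∧ w2 = n * w0 ∧ (σ = 1 ∨ σ = -1) ∧ (τ = 1 ∨ τ = -1) ∧
      2 * (⟨u0, v0⟩ : ℤ√(-D)) ^ m = (σ : ℤ√(-D)) * 2 ^ m * ⟨u1, v1⟩ ∧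
      2 * (⟨u0, v0⟩ : ℤ√(-D)) ^ n = (τ : ℤ√(-D)) * 2 ^ n * ⟨u2, v2⟩ := by
      intro u1 v1 u2 v2 w1 w2 hlt hN hw1 hw2 h1 h2
      obtain ⟨u3, v3, h3, e4, e5⟩ := step_lt D u1 v1 u2 v2 w1 w2 hDo hlt h1 h2
      obtain ⟨u0, v0, w0, m, n, σ, τ, h0, hw0, hm, hn, hmn, e1, e2, hσ, hτ, p1, p2⟩ :=
        ih u1 v1 u3 v3 w1 (w2 - w1) (by omega) hw1 (by omega) h1 h3
      refine ⟨u0, v0, w0, m, m + n, σ, σ * τ, h0, hw0, hm, by omega, ?_, e1, ?_, hσ, ?_, p1, ?_⟩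
      · simpa using hmn
      · rw [add_mul, ← e1, ← e2]; omega
      · rcases hσ with rfl | rfl <;> rcases hτ with rfl | rfl <;> simp
      · have hz : (2 : ℤ√(-D)) * ⟨u2, v2⟩ = ⟨u1, v1⟩ * ⟨u3, v3⟩ := by
          ext
          · simp [e4]; ring
          · simp [e5]; ring
        have h2z : (2 : ℤ√(-D)) ≠ 0 := by
          intro h; have := congrArg Zsqrtd.re h; simp at this
        have hreg : ∀ x y : ℤ√(-D), 2 * x = 2 * y → x = y := by
          intro x y hxy
          have r1 := congrArg Zsqrtd.re hxy
          have r2 := congrArg Zsqrtd.im hxy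
          simp at r1 r2
          exact Zsqrtd.ext r1 r2
        apply hreg
        push_cast
        calc (2 : ℤ√(-D)) * (2 * ⟨u0, v0⟩ ^ (m + n)) = (2 * ⟨u0, v0⟩ ^ m) * (2 * ⟨u0, v0⟩ ^ n) := by ring
          _ = (σ * 2 ^ m * ⟨u1, v1⟩) * (τ * 2 ^ n * ⟨u3, v3⟩) := by rw [p1, p2]
          _ = σ * τ * 2 ^ (m + n) * (⟨u1, v1⟩ * ⟨u3, v3⟩) := by ring
          _ = _ := by rw [← hz]; ring
    intro u1 v1 u2 v2 w1 w2 hN hw1 hw2 h1 h2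
    rcases lt_trichotomy w1 w2 with hlt | heq | hgt
    · exact main u1 v1 u2 v2 w1 w2 hlt hN hw1 hw2 h1 h2
    · subst heq
      rcases step_eq D u1 v1 u2 v2 w1 hD h1 h2 with ⟨rfl, rfl⟩ | ⟨rfl, rfl⟩
      · exact ⟨u2, v2, w1, 1, 1, 1, 1, h1, hw1, le_rfl, le_rfl, by simp, by simp, by simp,
          by simp, by simp, by simp, by simp⟩
      · refine ⟨u1, v1, w1, 1, 1, 1, -1, h1, hw1, le_rfl, le_rfl, by simp, by simp, by simp,
          by simp, by simp, by simp, ?_⟩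
        ext <;> simp
    · obtain ⟨u0, v0, w0, m, n, σ, τ, h0, hw0, hm, hn, hmn, e1, e2, hσ, hτ, p1, p2⟩ :=
        main u2 v2 u1 v1 w2 w1 hgt (by omega) hw2 hw1 h2 h1
      exact ⟨u0, v0, w0, n, m, τ, σ, h0, hw0, hn, hm, hmn.symm, e2, e1, hτ, hσ, p2, p1⟩

/-! ### Cross-parity cases -/

theorem pow_two_dvd_bounded (A : ℤ) (hA : 0 < A) : ¬ ∀ k : ℕ, (2:ℤ) ^ k ∣ A := by
  intro h
  have h1 := Int.le_of_dvd hA (h A.toNat)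
  have h2 : A.toNat < 2 ^ A.toNat := Nat.lt_two_pow_self
  have h3 : (A.toNat : ℤ) < 2 ^ A.toNat := by exact_mod_cast h2
  rw [Int.toNat_of_nonneg hA.le] at h3
  linarith

theorem two_dvd_of_odd_pow_sub (k n : ℕ) (A : ℤ) (hA : Odd A) (hn : Odd n)
    (h : (2:ℤ) ^ k ∣ A ^ n - 1) : (2:ℤ) ^ k ∣ A - 1 := by
  have h1 : A ^ n - 1 = (∑ i ∈ Finset.range n, A ^ i) * (A - 1) := (geom_sum_mul A n).symm
  have hodd : Odd (∑ i ∈ Finset.range n, A ^ i) := by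
    obtain ⟨t, rfl⟩ := hn
    clear h h1
    induction t with
    | zero => simp
    | succ t ih =>
      rw [show 2 * (t + 1) + 1 = 2 * t + 1 + 1 + 1 by ring, Finset.sum_range_succ,
        Finset.sum_range_succ]
      have h2 : Odd (A ^ (2 * t + 1)) := hA.pow
      have h3 : Odd (A ^ (2 * t + 1 + 1)) := hA.pow
      exact (ih.add_odd h2).add_odd h3
  rw [h1] at h
  have hc : IsCoprime ((2:ℤ) ^ k) (∑ i ∈ Finset.range n, A ^ i) := by
    apply IsCoprime.pow_left
    obtain ⟨t, ht⟩ := hodd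
    rw [ht]
    exact ⟨-t, 1, by ring⟩
  exact hc.dvd_of_dvd_mul_left h

theorem two_dvd_of_odd_pow_add (k n : ℕ) (A : ℤ) (hA : Odd A) (hn : Odd n)
    (h : (2:ℤ) ^ k ∣ A ^ n + 1) : (2:ℤ) ^ k ∣ A + 1 := by
  have := two_dvd_of_odd_pow_sub k n (-A) hA.neg hn (by
    rw [hn.neg_pow]
    have : -A ^ n - 1 = - (A ^ n + 1) := by ring
    rw [this, dvd_neg]; exact h)
  have h2 : -A - 1 = -(A + 1) := by ring
  rwa [h2, dvd_neg] at this

/-- even-odd solution -/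
theorem cross_eo (a b : ℤ) (x y z k : ℕ) (ha1 : 1 < a) (hb1 : 1 < b) (hb : Odd b)
    (hx : Even x) (hx0 : 0 < x) (hy : Odd y) (h : a ^ x + b ^ y = 2 ^ z)
    (hk : (2:ℤ) ^ k ∣ a ^ 2 - 1) : (2:ℤ) ^ k ∣ b + 1 := by
  obtain ⟨i, rfl⟩ := hx
  have h1 : (2:ℤ) ^ k ∣ a ^ (i + i) - 1 := by
    refine hk.trans ?_
    rw [← two_mul, pow_mul]
    simpa using sub_dvd_pow_sub_pow (a ^ 2) 1 i
  have hax : 1 < a ^ (i + i) := one_lt_pow₀ ha1 (by omega)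
  have hby : 1 < b ^ y := one_lt_pow₀ hb1 (by rintro rfl; simp at hy)
  rcases le_or_gt k z with hkz | hkz
  · apply two_dvd_of_odd_pow_add k y b hb hy
    have : b ^ y + 1 = 2 ^ z - (a ^ (i + i) - 1) := by linarith
    rw [this]
    exact dvd_sub (pow_dvd_pow _ hkz) h1
  · exfalso
    have := Int.le_of_dvd (by linarith) ((pow_dvd_pow (2:ℤ) hkz.le).trans h1)
    linarith

theorem cross_oo (a b : ℤ) (x y z k : ℕ) (ha1 : 1 < a) (hb1 : 1 < b) (ha : Odd a)
    (hx : Odd x) (hy : Odd y) (h : a ^ x + b ^ y = 2 ^ z)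
    (hk : (2:ℤ) ^ k ∣ b + 1) : (2:ℤ) ^ k ∣ a - 1 := by
  have h1 : (2:ℤ) ^ k ∣ b ^ y + 1 := by
    refine hk.trans ?_
    simpa using Odd.add_dvd_pow_add_pow b 1 hy
  have hax : 1 < a ^ x := one_lt_pow₀ ha1 (by rintro rfl; simp at hx)
  have hby : 1 < b ^ y := one_lt_pow₀ hb1 (by rintro rfl; simp at hy)
  rcases le_or_gt k z with hkz | hkz
  · apply two_dvd_of_odd_pow_sub k x a ha hx
    have : a ^ x - 1 = 2 ^ z - (b ^ y + 1) := by linarith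
    rw [this]
    exact dvd_sub (pow_dvd_pow _ hkz) h1
  · exfalso
    have := Int.le_of_dvd (by linarith) ((pow_dvd_pow (2:ℤ) hkz.le).trans h1)
    linarith

theorem two_pow_succ_dvd (a : ℤ) (k : ℕ) (ha : Odd a) (s : ℤ) (hs : s = 1 ∨ s = -1)
    (h : (2:ℤ) ^ k ∣ a - s) : (2:ℤ) ^ (k + 1) ∣ a ^ 2 - 1 := by
  have : a ^ 2 - 1 = (a - s) * (a + s) := by rcases hs with rfl | rfl <;> ring
  rw [this, pow_succ]
  apply mul_dvd_mul h
  obtain ⟨t, rfl⟩ := ha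
  rcases hs with rfl | rfl <;> omega

theorem M1 (a b : ℤ) (x y z x' y' z' : ℕ) (ha1 : 1 < a) (hb1 : 1 < b) (ha : Odd a) (hb : Odd b)
    (hx : Even x) (hx0 : 0 < x) (hy : Odd y) (h : a ^ x + b ^ y = 2 ^ z)
    (hx' : Odd x') (hy' : Odd y') (h' : a ^ x' + b ^ y' = 2 ^ z') : False := by
  apply pow_two_dvd_bounded (b + 1) (by linarith)
  intro k
  induction k with
  | zero => simp
  | succ k ih =>
    have h1 := cross_oo a b x' y' z' k ha1 hb1 ha hx' hy' h' ih
    exact cross_eo a b x y z (k+1) ha1 hb1 hb hx hx0 hy h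
      (two_pow_succ_dvd a k ha 1 (Or.inl rfl) h1)

theorem M2 (a b : ℤ) (x y z x' y' z' : ℕ) (ha1 : 1 < a) (hb1 : 1 < b) (ha : Odd a) (hb : Odd b)
    (hx : Even x) (hx0 : 0 < x) (hy : Odd y) (h : a ^ x + b ^ y = 2 ^ z)
    (hx' : Odd x') (hy' : Even y') (hy0 : 0 < y') (h' : a ^ x' + b ^ y' = 2 ^ z') : False := by
  apply pow_two_dvd_bounded (b + 1) (by linarith)
  intro k
  induction k with
  | zero => simp
  | succ k ih =>
    have h1 := cross_eo b a y' x' z' (k+1) hb1 ha1 ha hy' hy0 hx' (by linarith)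
      (two_pow_succ_dvd b k hb (-1) (Or.inr rfl) (by simpa using ih))
    have h2 := two_pow_succ_dvd a (k+1) ha (-1) (Or.inr rfl) (by simpa using h1)
    exact cross_eo a b x y z (k+1) ha1 hb1 hb hx hx0 hy h ((pow_dvd_pow _ (by omega)).trans h2)

/-! ### helper facts -/

theorem orient (u v : ℤ) (hu : Odd u) (hv : Odd v) :
    ∃ v' : ℤ, (v' = v ∨ v' = -v) ∧ Odd v' ∧ (4:ℤ) ∣ u - v' := by
  by_cases h : (4:ℤ) ∣ u - v
  · exact ⟨v, Or.inl rfl, hv, h⟩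
  · refine ⟨-v, Or.inr rfl, hv.neg, ?_⟩
    obtain ⟨k, rfl⟩ := hu
    obtain ⟨l, rfl⟩ := hv
    omega

theorem odd_sq_mod8 (u : ℤ) (hu : Odd u) : u ^ 2 % 8 = 1 := by
  have h : u % 8 = 1 ∨ u % 8 = 3 ∨ u % 8 = 5 ∨ u % 8 = 7 := by
    obtain ⟨k, rfl⟩ := hu; omega
  rcases h with h | h | h | h <;> simp [pow_two, Int.mul_emod, h]

theorem Sol.D_mod {D u v : ℤ} {w : ℕ} (h : Sol D u v w) (hw : 1 ≤ w) : D % 8 = 7 := by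
  obtain ⟨h1, h2, h3, h4⟩ := h
  have e1 := odd_sq_mod8 u h1
  have e2 := odd_sq_mod8 v h2
  obtain ⟨n, rfl⟩ : ∃ n, w = n + 1 := ⟨w - 1, by omega⟩
  rw [show n + 1 + 2 = n + 3 by ring, pow_add] at h4
  have h5 : (D * v ^ 2) % 8 = D % 8 := by rw [Int.mul_emod, e2]; simp
  omega

theorem zs_sq (D u v : ℤ) : (⟨u, v⟩ : ℤ√(-D)) ^ 2 = ⟨u ^ 2 - D * v ^ 2, 2 * u * v⟩ := by
  rw [pow_two]
  ext
  · simp; ring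
  · simp; ring

theorem zs_norm_pow (D u v : ℤ) (k : ℕ) :
    ((⟨u, v⟩ : ℤ√(-D)) ^ k).re ^ 2 + D * ((⟨u, v⟩ : ℤ√(-D)) ^ k).im ^ 2
      = (u ^ 2 + D * v ^ 2) ^ k := by
  induction k with
  | zero => simp
  | succ k ih =>
    rw [pow_succ (⟨u, v⟩ : ℤ√(-D)) k, pow_succ (u ^ 2 + D * v ^ 2) k, ← ih]
    simp
    ring

theorem good_of (a b X Y : ℤ) (x y j : ℕ)
    (hC : (ce X Y j).1 ^ 2 * X = (4 ^ j) ^ 2 * a ^ x)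
    (hE : (ce X Y j).2 ^ 2 * Y = (4 ^ j) ^ 2 * b ^ y)
    (ha : ∀ p : ℕ, p.Prime → (p:ℤ) ∣ a → (p:ℤ) ∣ X)
    (hb : ∀ p : ℕ, p.Prime → (p:ℤ) ∣ b → (p:ℤ) ∣ Y) : Good X Y j := by
  intro p hp h2
  have hpp := Nat.prime_iff_prime_int.mp hp
  have h4 : ¬ (p:ℤ) ∣ (4 ^ j) ^ 2 := by
    intro h
    have h := hpp.dvd_of_dvd_pow (hpp.dvd_of_dvd_pow h)
    have h : p ∣ 2 ^ 2 := by exact_mod_cast h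
    exact h2 ((Nat.prime_dvd_prime_iff_eq hp Nat.prime_two).mp (hp.dvd_of_dvd_pow h))
  constructor
  · intro h
    apply ha p hp
    have : (p:ℤ) ∣ (4 ^ j) ^ 2 * a ^ x := by
      rw [← hC]; exact (dvd_pow h (by norm_num)).mul_right _
    exact hpp.dvd_of_dvd_pow ((hpp.dvd_or_dvd this).resolve_left h4)
  · intro h
    apply hb p hp
    have : (p:ℤ) ∣ (4 ^ j) ^ 2 * b ^ y := by
      rw [← hE]; exact (dvd_pow h (by norm_num)).mul_right _
    exact hpp.dvd_of_dvd_pow ((hpp.dvd_or_dvd this).resolve_left h4)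

theorem dvd_pow_of (a X c : ℤ) (x j : ℕ) (hX : Odd X)
    (hC : c * X = (4 ^ j) ^ 2 * a ^ x) : X ∣ a ^ x := by
  have h : X ∣ (4 ^ j) ^ 2 * a ^ x := ⟨c, by rw [← hC]; ring⟩
  have hc : IsCoprime X ((4 ^ j) ^ 2) := by
    apply IsCoprime.pow_right
    apply IsCoprime.pow_right
    rw [show (4:ℤ) = 2 ^ 2 by norm_num]
    apply IsCoprime.pow_right
    obtain ⟨t, ht⟩ := hX
    rw [ht]
    exact ⟨1, -t, by ring⟩
  exact hc.dvd_of_dvd_mul_left h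

/-! ### gcd lemma for real parts -/

theorem re_add (D : ℤ) (s t : ℤ√(-D)) :
    (s * t * t).re + (t.re ^ 2 + D * t.im ^ 2) * s.re = 2 * (s * t).re * t.re := by
  simp
  ring

theorem re_gcd (D u v : ℤ) (p : ℤ) (hp : Prime p) (hN : ¬ p ∣ u ^ 2 + D * v ^ 2) :
    ∀ (N m n : ℕ), m + n ≤ N → Nat.Coprime m n →
      p ∣ ((⟨u, v⟩ : ℤ√(-D)) ^ m).re → p ∣ ((⟨u, v⟩ : ℤ√(-D)) ^ n).re →
      p ∣ u ∧ Odd m ∧ Odd n := by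
  set z : ℤ√(-D) := ⟨u, v⟩ with hz
  have key : ∀ m l : ℕ, l ≤ m → p ∣ (z ^ (m + l)).re → (p ∣ (z ^ m).re ∨ p ∣ (z ^ l).re) →
      p ∣ (z ^ (m - l)).re := by
    intro m l hl h1 h2
    have h := re_add D (z ^ (m - l)) (z ^ l)
    rw [← pow_add, ← pow_add, show m - l + l = m by omega, hz, zs_norm_pow, ← hz] at h
    have h3 : p ∣ (u ^ 2 + D * v ^ 2) ^ l * (z ^ (m - l)).re := by
      have : (u ^ 2 + D * v ^ 2) ^ l * (z ^ (m - l)).re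
        = 2 * (z ^ m).re * (z ^ l).re - (z ^ (m + l)).re := by linarith
      rw [this]
      apply dvd_sub _ h1
      rcases h2 with h2 | h2
      · exact (h2.mul_left _).mul_right _
      · exact h2.mul_left _
    exact (hp.dvd_or_dvd h3).resolve_left (fun h4 => hN (hp.dvd_of_dvd_pow h4))
  have h0 : ¬ p ∣ (z ^ 0).re := by
    simp only [pow_zero, Zsqrtd.re_one]
    intro h
    exact hp.not_isUnit (isUnit_of_dvd_one h)
  intro N
  induction N with
  | zero =>
    intro m n h _ h1
    have : m = 0 := by omega
    rw [this] at h1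
    exact absurd h1 h0
  | succ N ih =>
    have main : ∀ m n : ℕ, m < n → m + n ≤ N + 1 → Nat.Coprime m n →
        p ∣ (z ^ m).re → p ∣ (z ^ n).re → p ∣ u ∧ Odd m ∧ Odd n := by
      intro m n hlt hle hc h1 h2
      have hm : m ≠ 0 := by rintro rfl; exact h0 h1
      obtain ⟨l, rfl⟩ : ∃ l, n = m + l := ⟨n - m, by omega⟩
      have hcl : Nat.Coprime m l := by simpa using hc
      rcases le_total l m with hl | hl
      · have h3 := key m l hl h2 (Or.inl h1)
        obtain ⟨r, rfl⟩ : ∃ r, m = l + r := ⟨m - l, by omega⟩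
        rw [Nat.add_sub_cancel_left] at h3
        have hcr : Nat.Coprime (l + r) r := by
          have : Nat.Coprime r l := by simpa using hcl
          simpa using this.symm
        obtain ⟨h4, h5, h6⟩ := ih (l + r) r (by omega) hcr h1 h3
        refine ⟨h4, h5, ?_⟩
        rw [Nat.odd_iff] at *
        omega
      · have h3 := key l m hl (by rw [add_comm]; exact h2) (Or.inr h1)
        obtain ⟨r, rfl⟩ : ∃ r, l = m + r := ⟨l - m, by omega⟩
        rw [Nat.add_sub_cancel_left] at h3
        have hcr : Nat.Coprime m r := by simpa using hcl
        obtain ⟨h4, h5, h6⟩ := ih m r (by omega) hcr h1 h3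
        refine ⟨h4, h5, ?_⟩
        rw [Nat.odd_iff] at *
        omega
    intro m n hle hc h1 h2
    rcases lt_trichotomy m n with h | h | h
    · exact main m n h hle hc h1 h2
    · subst h
      have : m = 1 := by simpa using hc
      subst this
      refine ⟨by simpa [hz] using h1, odd_one, odd_one⟩
    · obtain ⟨h3, h4, h5⟩ := main n m h (by omega) hc.symm h2 h1
      exact ⟨h3, h5, h4⟩

/-! ### Powers in terms of `ce` -/

theorem eo_ce (D u v : ℤ) (j : ℕ) :
    (⟨u, v⟩ : ℤ√(-D)) ^ (2 * j + 1) =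
      ⟨(ce (u ^ 2) (D * v ^ 2) j).1 * u, (ce (u ^ 2) (D * v ^ 2) j).2 * v⟩ := by
  induction j with
  | zero => simp [ce_zero]
  | succ j ih =>
    rw [show 2 * (j + 1) + 1 = (2 * j + 1) + 2 by ring, pow_add, ih, ce_succ1, ce_succ2, zs_sq]
    ext
    · simp; ring
    · simp; ring

theorem oo_ce (D u v X Y : ℤ) (hu : X - Y = 2 * u) (hv : X * Y = D * v ^ 2) (j : ℕ) :
    (2 * (⟨u, v⟩ : ℤ√(-D))) ^ (2 * j + 1) =
      ⟨(ce X Y j).1 ^ 2 * X - (ce X Y j).2 ^ 2 * Y, 2 * (ce X Y j).1 * (ce X Y j).2 * v⟩ := by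
  induction j with
  | zero =>
    ext
    · simp [ce_zero]; linarith
    · simp [ce_zero]
  | succ j ih =>
    rw [show 2 * (j + 1) + 1 = (2 * j + 1) + 2 by ring, pow_add, ih, ce_succ1, ce_succ2]
    have : (2 * (⟨u, v⟩ : ℤ√(-D))) = ⟨X - Y, 2 * v⟩ := by
      ext
      · simp [hu]
      · simp
    rw [this, zs_sq]
    ext
    · simp
      generalize (ce X Y j).1 = C
      generalize (ce X Y j).2 = E
      linear_combination (4 * C ^ 2 * X - 4 * E ^ 2 * Y + 8 * C * E * (X - Y)) * hv
    · simp
      generalize (ce X Y j).1 = C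
      generalize (ce X Y j).2 = E
      linear_combination (8 * C * E * v) * hv

theorem four_pow_sq (j : ℕ) : ((4:ℤ) ^ j) ^ 2 = (2 ^ (2 * j)) ^ 2 := by
  rw [pow_mul]; norm_num

theorem zs_extract (D u0 v0 U v σ : ℤ) (m : ℕ)
    (hp : 2 * (⟨u0, v0⟩ : ℤ√(-D)) ^ m = (σ : ℤ√(-D)) * 2 ^ m * ⟨U, v⟩) :
      2 * ((⟨u0, v0⟩ : ℤ√(-D)) ^ m).re = σ * 2 ^ m * U ∧
      2 * ((⟨u0, v0⟩ : ℤ√(-D)) ^ m).im = σ * 2 ^ m * v := by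
  have e : (σ : ℤ√(-D)) * 2 ^ m * ⟨U, v⟩ =
    ((σ * 2 ^ m : ℤ) : ℤ√(-D)) * ⟨U, v⟩ := by push_cast; ring
  have e2 : (2 : ℤ√(-D)) = ((2 : ℤ) : ℤ√(-D)) := by norm_cast
  rw [e, e2] at hp
  have r1 := congrArg Zsqrtd.re hp
  have r2 := congrArg Zsqrtd.im hp
  rw [Zsqrtd.re_smul, Zsqrtd.re_smul] at r1
  rw [Zsqrtd.im_smul, Zsqrtd.im_smul] at r2
  exact ⟨r1, r2⟩

/-! ### Both solutions with `x` even, `y` odd -/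

theorem eo_sol (a b : ℕ) (i k z : ℕ) (ha : Odd a) (hb : Odd b) (hz : 3 ≤ z)
    (h : a ^ (2 * i) + b ^ (2 * k + 1) = 2 ^ z) :
    ∃ v : ℤ, v ^ 2 = (b:ℤ) ^ (2 * k) ∧ Sol b ((a:ℤ) ^ i) v (z - 2) := by
  have ha' : Odd ((a:ℤ) ^ i) := by exact_mod_cast ha.pow
  have hb' : Odd ((b:ℤ) ^ k) := by exact_mod_cast hb.pow
  obtain ⟨v, hv, hvo, h4⟩ := orient _ _ ha' hb'
  have hv2 : v ^ 2 = (b:ℤ) ^ (2 * k) := by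
    rcases hv with rfl | rfl <;> ring
  refine ⟨v, hv2, ha', hvo, h4, ?_⟩
  rw [hv2, show z - 2 + 2 = z by omega]
  have : (a:ℤ) ^ (2 * i) + (b:ℤ) ^ (2 * k + 1) = 2 ^ z := by exact_mod_cast h
  rw [← this]; ring

theorem sq_ne (u : ℤ) (h : u ^ 2 = 3 ∨ u ^ 2 = 5 ∨ u ^ 2 = 13) : False := by
  have hle : u ≤ 3 := by rcases h with q | q | q <;> nlinarith
  have hge : -3 ≤ u := by rcases h with q | q | q <;> nlinarith
  interval_cases u <;> norm_num at h

theorem EO (a b : ℕ) (hab : Nat.Coprime a b) (ha : Odd a) (hb : Odd b) (ha1 : 1 < a) (hb1 : 1 < b)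
    (i k z i' k' z' : ℕ) (hi : 1 ≤ i) (hi' : 1 ≤ i') (hz : 3 ≤ z) (hz' : 3 ≤ z')
    (h : a ^ (2 * i) + b ^ (2 * k + 1) = 2 ^ z)
    (h' : a ^ (2 * i') + b ^ (2 * k' + 1) = 2 ^ z') :
    i = i' ∧ k = k' := by
  obtain ⟨v, hv, hs⟩ := eo_sol a b i k z ha hb hz h
  obtain ⟨v', hv', hs'⟩ := eo_sol a b i' k' z' ha hb hz' h'
  have hD := hs.D_mod (by omega)
  have hbo : Odd (b:ℤ) := by exact_mod_cast hb
  have hao : Odd (a:ℤ) := by exact_mod_cast ha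
  obtain ⟨u0, v0, w0, m, n, σ, τ, h0, hw0, hm, hn, hmn, e1, e2, hσ, hτ, p1, p2⟩ :=
    euclid b hbo (by omega) _ _ _ _ _ _ _ le_rfl (by omega) (by omega) hs hs'
  have hcopZ : IsCoprime (a:ℤ) (b:ℤ) := Nat.isCoprime_iff_coprime.mpr hab
  -- every prime of `a` divides `u0`
  obtain ⟨r1, r2⟩ := zs_extract _ _ _ _ _ _ _ p1
  obtain ⟨r1', r2'⟩ := zs_extract _ _ _ _ _ _ _ p2
  have hprime : ∀ p : ℕ, p.Prime → (p:ℤ) ∣ a → (p:ℤ) ∣ u0 ∧ Odd m ∧ Odd n := by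
    intro p hp hpa
    have hpp := Nat.prime_iff_prime_int.mp hp
    have hp2 : ¬ (p:ℤ) ∣ 2 := by
      intro h2
      have h3 : p ∣ 2 := by exact_mod_cast h2
      have := (Nat.prime_dvd_prime_iff_eq hp Nat.prime_two).mp h3
      subst this
      obtain ⟨t, ht⟩ := hao
      push_cast at hpa
      omega
    apply re_gcd b u0 v0 p hpp _ _ m n le_rfl hmn
    · have : (p:ℤ) ∣ 2 * ((⟨u0, v0⟩ : ℤ√(-(b:ℤ))) ^ m).re := by
        rw [r1]; exact (dvd_pow hpa (by omega)).mul_left _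
      exact (hpp.dvd_or_dvd this).resolve_left hp2
    · have : (p:ℤ) ∣ 2 * ((⟨u0, v0⟩ : ℤ√(-(b:ℤ))) ^ n).re := by
        rw [r1']; exact (dvd_pow hpa (by omega)).mul_left _
      exact (hpp.dvd_or_dvd this).resolve_left hp2
    · rw [h0.2.2.2]
      intro h3
      exact hp2 (hpp.dvd_of_dvd_pow h3)
  have hodd : Odd m ∧ Odd n := by
    have hp := Nat.minFac_prime (show a ≠ 1 by omega)
    exact (hprime _ hp (by exact_mod_cast Nat.minFac_dvd a)).2
  obtain ⟨⟨j, hj⟩, ⟨j', hj'⟩⟩ := hodd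
  set X : ℤ := u0 ^ 2 with hX
  set Y : ℤ := b * v0 ^ 2 with hY
  have hXY : X + Y = 2 ^ (w0 + 2) := h0.2.2.2
  have hrel : ∀ (m j i k : ℕ) (σ v : ℤ), (σ = 1 ∨ σ = -1) → m = 2 * j + 1 → v ^ 2 = (b:ℤ) ^ (2 * k) →
      2 * ((⟨u0, v0⟩ : ℤ√(-(b:ℤ))) ^ m).re = σ * 2 ^ m * a ^ i →
      2 * ((⟨u0, v0⟩ : ℤ√(-(b:ℤ))) ^ m).im = σ * 2 ^ m * v →
      (ce X Y j).1 ^ 2 * X = (4 ^ j) ^ 2 * (a:ℤ) ^ (2 * i) ∧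
      (ce X Y j).2 ^ 2 * Y = (4 ^ j) ^ 2 * (b:ℤ) ^ (2 * k + 1) := by
    intro m j i k σ v hσ hm hv q1 q2
    rw [hm, eo_ce, pow_succ (2:ℤ)] at q1 q2
    simp only at q1 q2
    rw [← hX, ← hY] at q1 q2
    have hσ2 : σ ^ 2 = 1 := by rcases hσ with rfl | rfl <;> norm_num
    have q1' : (ce X Y j).1 * u0 = σ * 2 ^ (2 * j) * a ^ i := by linarith
    have q2' : (ce X Y j).2 * v0 = σ * 2 ^ (2 * j) * v := by linarith
    rw [four_pow_sq]
    constructor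
    · calc (ce X Y j).1 ^ 2 * X = ((ce X Y j).1 * u0) ^ 2 := by rw [hX]; ring
        _ = σ ^ 2 * (2 ^ (2 * j)) ^ 2 * a ^ (2 * i) := by rw [q1']; ring
        _ = _ := by rw [hσ2]; ring
    · calc (ce X Y j).2 ^ 2 * Y = b * ((ce X Y j).2 * v0) ^ 2 := by rw [hY]; ring
        _ = σ ^ 2 * (2 ^ (2 * j)) ^ 2 * (b * v ^ 2) := by rw [q2']; ring
        _ = _ := by rw [hσ2, hv]; ring
  obtain ⟨c1, c2⟩ := hrel m j i k σ v hσ hj hv r1 r2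
  obtain ⟨c1', c2'⟩ := hrel n j' i' k' τ v' hτ hj' hv' r1' r2'
  have hXo : Odd X := h0.1.pow
  have hYo : Odd Y := hbo.mul h0.2.1.pow
  have hX0 : 0 < X := by
    have : u0 ≠ 0 := by rintro rfl; exact absurd h0.1 (by decide)
    positivity
  have hY0 : 0 < Y := by
    have : v0 ≠ 0 := by rintro rfl; exact absurd h0.2.1 (by decide)
    have : (0:ℤ) < b := by omega
    positivity
  have hcop : IsCoprime X Y :=
    (((hcopZ.pow : IsCoprime ((a:ℤ) ^ (2 * i)) ((b:ℤ) ^ (2 * k + 1))).of_isCoprime_of_dvd_left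
      (dvd_pow_of _ _ _ _ _ hXo c1)).of_isCoprime_of_dvd_right (dvd_pow_of _ _ _ _ _ hYo c2))
  have hpa : ∀ p : ℕ, p.Prime → (p:ℤ) ∣ a → (p:ℤ) ∣ X := fun p hp hd =>
    dvd_pow (hprime p hp hd).1 (by norm_num)
  have hpb : ∀ p : ℕ, p.Prime → (p:ℤ) ∣ b → (p:ℤ) ∣ Y := fun p hp hd => hd.mul_right _
  have hzero : ∀ (j x y : ℕ), (ce X Y j).1 ^ 2 * X = (4 ^ j) ^ 2 * (a:ℤ) ^ x →
      (ce X Y j).2 ^ 2 * Y = (4 ^ j) ^ 2 * (b:ℤ) ^ y → j = 0 := by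
    intro j x y d1 d2
    by_contra hne
    have hg := good_of a b X Y x y j d1 d2 hpa hpb
    have hk := key_full X Y w0 j hw0 hXo hX0 hY0 hcop hXY (by omega) hg
    have h35 : u0 ^ 2 = 3 ∨ u0 ^ 2 = 5 ∨ u0 ^ 2 = 13 := by
      rw [← hX]
      rcases hk with ⟨⟨q, -⟩ | ⟨q, -⟩, -⟩ | ⟨⟨q, -⟩ | ⟨q, -⟩, -⟩
      · exact Or.inl q
      · exact Or.inr (Or.inl q)
      · exact Or.inl q
      · exact Or.inr (Or.inr q)
    exact sq_ne u0 h35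
  have hj0 := hzero j _ _ c1 c2
  have hj0' := hzero j' _ _ c1' c2'
  subst hj0
  subst hj0'
  simp only [ce_zero] at c1 c2 c1' c2'
  have f1 : (a:ℤ) ^ (2 * i) = (a:ℤ) ^ (2 * i') := by linarith
  have f2 : (b:ℤ) ^ (2 * k + 1) = (b:ℤ) ^ (2 * k' + 1) := by linarith
  have f1' : a ^ (2 * i) = a ^ (2 * i') := by exact_mod_cast f1
  have f2' : b ^ (2 * k + 1) = b ^ (2 * k' + 1) := by exact_mod_cast f2
  have g1 := Nat.pow_right_injective (show 2 ≤ a by omega) f1'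
  have g2 := Nat.pow_right_injective (show 2 ≤ b by omega) f2'
  omega

/-! ### Both solutions with `x`, `y` odd -/

theorem oo_sol (a b : ℕ) (i k z : ℕ) (ha : Odd a) (hb : Odd b) (hz : 3 ≤ z)
    (h : a ^ (2 * i + 1) + b ^ (2 * k + 1) = 2 ^ z) :
    ∃ U v : ℤ, 2 * U = (a:ℤ) ^ (2 * i + 1) - (b:ℤ) ^ (2 * k + 1) ∧
      Sol (a * b) U v (2 * (z - 2)) := by
  have ha' : Odd ((a:ℤ) ^ i) := by exact_mod_cast ha.pow
  have hb' : Odd ((b:ℤ) ^ k) := by exact_mod_cast hb.pow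
  have hb'' : Odd ((b:ℤ) ^ (2 * k + 1)) := by exact_mod_cast hb.pow
  have hZ : (a:ℤ) ^ (2 * i + 1) + (b:ℤ) ^ (2 * k + 1) = 2 ^ z := by exact_mod_cast h
  obtain ⟨n, rfl⟩ : ∃ n, z = n + 2 := ⟨z - 2, by omega⟩
  have hU : Odd ((2:ℤ) ^ (n + 1) - (b:ℤ) ^ (2 * k + 1)) := by
    apply Even.sub_odd _ hb''
    exact ⟨2 ^ n, by ring⟩
  obtain ⟨v, hv, hvo, h4⟩ := orient _ _ hU (ha'.mul hb')
  have hv2 : v ^ 2 = (a:ℤ) ^ (2 * i) * (b:ℤ) ^ (2 * k) := by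
    rcases hv with rfl | rfl <;> ring
  have h2 : (2:ℤ) ^ (n + 2) = 2 * 2 ^ (n + 1) := by ring
  refine ⟨_, v, ?_, hU, hvo, h4, ?_⟩
  · linarith
  · rw [hv2, Nat.add_sub_cancel, show 2 * n + 2 = (n + 1) + (n + 1) by ring, pow_add 2 (n + 1)]
    have e1 : (a:ℤ) * b * (a ^ (2 * i) * b ^ (2 * k)) = a ^ (2 * i + 1) * b ^ (2 * k + 1) := by ring
    rw [e1]
    have e2 : (a:ℤ) ^ (2 * i + 1) = 2 * 2 ^ (n + 1) - (b:ℤ) ^ (2 * k + 1) := by linarith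
    rw [e2]; ring

theorem not_even_aux (a b P e : ℤ) (k y : ℕ) (hcop : IsCoprime a b) (ha : Odd a)
    (ha1 : 1 < a) (h : 4 * (P * a * e) = 4 ^ k * b ^ y) : False := by
  have h1 : a ∣ 4 ^ k * b ^ y := ⟨4 * (P * e), by rw [← h]; ring⟩
  have hc : IsCoprime a (4 ^ k * b ^ y) := by
    apply IsCoprime.mul_right
    · apply IsCoprime.pow_right
      rw [show (4:ℤ) = 2 ^ 2 by norm_num]
      apply IsCoprime.pow_right
      obtain ⟨t, ht⟩ := ha
      rw [ht]
      exact ⟨1, -t, by ring⟩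
    · exact hcop.pow_right
  have := hc.isUnit_of_dvd' dvd_rfl h1
  rw [Int.isUnit_iff] at this
  omega

theorem oo_odd (a b u0 v0 U σ : ℤ) (x y z w0 m : ℕ) (hcop : IsCoprime a b) (ha : Odd a) (hb : Odd b)
    (ha1 : 1 < a) (hb1 : 1 < b) (hU : 2 * U = a ^ x - b ^ y) (hz : 2 ≤ z)
    (h : a ^ x + b ^ y = 2 ^ z) (h0 : Sol (a * b) u0 v0 w0) (hw : 2 * (z - 2) = m * w0)
    (hσ : σ = 1 ∨ σ = -1)
    (hp : 2 * ((⟨u0, v0⟩ : ℤ√(-(a * b))) ^ m).re = σ * 2 ^ m * U) : Odd m := by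
  by_contra hm
  rw [Nat.not_odd_iff_even] at hm
  obtain ⟨k, rfl⟩ := hm
  have hN := zs_norm_pow (a * b) u0 v0 k
  rw [h0.2.2.2] at hN
  rw [pow_add, Zsqrtd.re_mul] at hp
  generalize ((⟨u0, v0⟩ : ℤ√(-(a * b))) ^ k).re = c at hN hp
  generalize ((⟨u0, v0⟩ : ℤ√(-(a * b))) ^ k).im = e at hN hp
  have hN2 : 4 * (c ^ 2 + a * b * e ^ 2) = 4 ^ k * 2 ^ z := by
    rw [hN, show (4:ℤ) = 2 ^ 2 by norm_num, ← pow_mul, ← pow_mul, ← pow_add, ← pow_add]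
    congr 1
    have : z - 2 = k * w0 := by nlinarith
    have : z = k * w0 + 2 := by omega
    rw [this]; ring
  have h4k : (2:ℤ) ^ (k + k) = 4 ^ k := by rw [← two_mul, pow_mul]; norm_num
  rw [h4k] at hp
  rw [← h] at hN2
  rcases hσ with rfl | rfl
  · apply not_even_aux a b b (e ^ 2) k y hcop ha ha1
    have : 2 * (4 * (b * a * e ^ 2)) = 2 * (4 ^ k * b ^ y) := by
      linear_combination hN2 - 2 * hp - 4 ^ k * hU
    linarith
  · apply not_even_aux b a a (e ^ 2) k x hcop.symm hb hb1
    have : 2 * (4 * (a * b * e ^ 2)) = 2 * (4 ^ k * a ^ x) := by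
      linear_combination hN2 - 2 * hp + 4 ^ k * hU
    linarith

theorem oo_rel (D u v U P Q ρ : ℤ) (ω j z : ℕ) (hz : z = (2 * j + 1) * ω + 2)
    (h0 : u ^ 2 + D * v ^ 2 = 2 ^ (2 * ω + 2))
    (hU : 2 * U = P - Q) (h : P + Q = 2 ^ z)
    (hp : 2 * ((⟨u, v⟩ : ℤ√(-D)) ^ (2 * j + 1)).re = ρ * 2 ^ (2 * j + 1) * U) :
    2 * ((ce (2 ^ (ω + 1) + u) (2 ^ (ω + 1) - u) j).1 ^ 2 * (2 ^ (ω + 1) + u)) =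
      (4 ^ j) ^ 2 * ((1 + ρ) * P + (1 - ρ) * Q) ∧
    2 * ((ce (2 ^ (ω + 1) + u) (2 ^ (ω + 1) - u) j).2 ^ 2 * (2 ^ (ω + 1) - u)) =
      (4 ^ j) ^ 2 * ((1 - ρ) * P + (1 + ρ) * Q) := by
  have hXY : ((2:ℤ) ^ (ω + 1) + u) * (2 ^ (ω + 1) - u) = D * v ^ 2 := by
    have : (2:ℤ) ^ (2 * ω + 2) = 2 ^ (ω + 1) * 2 ^ (ω + 1) := by rw [← pow_add]; congr 1; ring
    rw [this] at h0
    linear_combination -h0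
  have hc := congrArg Zsqrtd.re
    (oo_ce D u v (2 ^ (ω + 1) + u) (2 ^ (ω + 1) - u) (by ring) hXY j)
  have hn := ce_norm (2 ^ (ω + 1) + u) (2 ^ (ω + 1) - u) j
  have e2 : (2 : ℤ√(-D)) ^ (2 * j + 1) = ((2 ^ (2 * j + 1) : ℤ) : ℤ√(-D)) := by norm_cast
  rw [mul_pow, e2, Zsqrtd.re_smul] at hc
  simp only at hc
  have e3 : (2:ℤ) ^ (ω + 1) + u + (2 ^ (ω + 1) - u) = 2 ^ (ω + 2) := by ring
  rw [e3] at hn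
  have e4 : ((2:ℤ) ^ (ω + 2)) ^ (2 * j + 1) = (4 ^ j) ^ 2 * 2 ^ z := by
    rw [four_pow_sq, ← pow_mul, ← pow_mul, ← pow_add, hz]
    congr 1
    ring
  have e5 : (2:ℤ) ^ (2 * j + 1) * 2 ^ (2 * j + 1) = 4 * (4 ^ j) ^ 2 := by
    rw [four_pow_sq, pow_succ]; ring
  rw [e4, ← h] at hn
  generalize (ce (2 ^ (ω + 1) + u) (2 ^ (ω + 1) - u) j).1 ^ 2 * (2 ^ (ω + 1) + u) = A at *
  generalize (ce (2 ^ (ω + 1) + u) (2 ^ (ω + 1) - u) j).2 ^ 2 * (2 ^ (ω + 1) - u) = B at *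
  have hd : A - B = ρ * (4 ^ j) ^ 2 * (P - Q) := by
    have : 2 * (A - B) = 2 * (ρ * (4 ^ j) ^ 2 * (P - Q)) := by
      rw [← hc, ← hU]
      linear_combination 2 ^ (2 * j + 1) * hp + ρ * U * e5
    linarith
  constructor
  · linear_combination hn + hd
  · linear_combination hn - hd

theorem eq_of_dvd_prime (a X q : ℤ) (ha : 1 < a) (hq : Prime q) (hq0 : 0 < q) (h : a ∣ X)
    (hX : X = q) : a = q := by
  subst hX
  obtain ⟨c, hc⟩ := h
  rcases hq.irreducible.isUnit_or_isUnit hc with h1 | h1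
  · rw [Int.isUnit_iff] at h1; omega
  · rw [Int.isUnit_iff] at h1
    rcases h1 with rfl | rfl <;> omega

theorem OO_core (a b u v U U' ρ : ℤ) (hcop : IsCoprime a b) (ha1 : 1 < a) (hb1 : 1 < b)
    (x y z x' y' z' ω j j' : ℕ) (hω : 1 ≤ ω)
    (h0 : Sol (a * b) u v (2 * ω))
    (hz : z = (2 * j + 1) * ω + 2) (hz' : z' = (2 * j' + 1) * ω + 2)
    (hU : 2 * U = a ^ x - b ^ y) (h : a ^ x + b ^ y = 2 ^ z)
    (hU' : 2 * U' = a ^ x' - b ^ y') (h' : a ^ x' + b ^ y' = 2 ^ z')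
    (ha : Odd a) (hρ : ρ = 1 ∨ ρ = -1)
    (hp : 2 * ((⟨u, v⟩ : ℤ√(-(a * b))) ^ (2 * j + 1)).re = 1 * 2 ^ (2 * j + 1) * U)
    (hp' : 2 * ((⟨u, v⟩ : ℤ√(-(a * b))) ^ (2 * j' + 1)).re = ρ * 2 ^ (2 * j' + 1) * U') :
    (a ^ x = a ^ x' ∧ b ^ y = b ^ y') ∨
    (((a = 3 ∧ b = 5) ∨ (a = 5 ∧ b = 3)) ∧ (z = 3 ∨ z = 5 ∨ z = 7)) ∨
    (((a = 3 ∧ b = 13) ∨ (a = 13 ∧ b = 3)) ∧ (z = 4 ∨ z = 8)) := by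
  obtain ⟨huo, hvo, -, hs⟩ := h0
  obtain ⟨c1, c2⟩ := oo_rel _ u v U _ _ 1 ω j z hz hs hU h hp
  obtain ⟨c1', c2'⟩ := oo_rel _ u v U' _ _ ρ ω j' z' hz' hs hU' h' hp'
  have hv0 : v ≠ 0 := by rintro rfl; exact absurd hvo (by decide)
  have hp2 : (0:ℤ) < 2 ^ (ω + 1) := by positivity
  have hXY : ((2:ℤ) ^ (ω + 1) + u) * (2 ^ (ω + 1) - u) = a * b * v ^ 2 := by
    have : (2:ℤ) ^ (2 * ω + 2) = 2 ^ (ω + 1) * 2 ^ (ω + 1) := by rw [← pow_add]; congr 1; ring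
    rw [this] at hs
    linear_combination -hs
  have hsum : ((2:ℤ) ^ (ω + 1) + u) + (2 ^ (ω + 1) - u) = 2 ^ (ω + 2) := by ring
  have hXo : Odd ((2:ℤ) ^ (ω + 1) + u) := Even.add_odd ⟨2 ^ ω, by ring⟩ huo
  have hYo : Odd ((2:ℤ) ^ (ω + 1) - u) := Even.sub_odd ⟨2 ^ ω, by ring⟩ huo
  have hpos : 0 < ((2:ℤ) ^ (ω + 1) + u) * (2 ^ (ω + 1) - u) := by
    rw [hXY]; positivity
  generalize hX : (2:ℤ) ^ (ω + 1) + u = X at *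
  generalize hY : (2:ℤ) ^ (ω + 1) - u = Y at *
  have hX0 : 0 < X := by
    by_contra hc
    nlinarith
  have hY0 : 0 < Y := by
    by_contra hc
    nlinarith
  have d1 : (ce X Y j).1 ^ 2 * X = (4 ^ j) ^ 2 * a ^ x := by linarith
  have d2 : (ce X Y j).2 ^ 2 * Y = (4 ^ j) ^ 2 * b ^ y := by linarith
  have hXd := dvd_pow_of _ _ _ _ _ hXo d1
  have hYd := dvd_pow_of _ _ _ _ _ hYo d2
  have hcXY : IsCoprime X Y :=
    ((hcop.pow : IsCoprime (a ^ x) (b ^ y)).of_isCoprime_of_dvd_left hXd).of_isCoprime_of_dvd_right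
      hYd
  have haX : a ∣ X := by
    have hc : IsCoprime a Y := (hcop.pow_right : IsCoprime a (b ^ y)).of_isCoprime_of_dvd_right hYd
    exact hc.dvd_of_dvd_mul_right ⟨b * v ^ 2, by rw [hXY]; ring⟩
  have hbY : b ∣ Y := by
    have hc : IsCoprime b X :=
      (hcop.symm.pow_right : IsCoprime b (a ^ x)).of_isCoprime_of_dvd_right hXd
    exact hc.dvd_of_dvd_mul_left ⟨a * v ^ 2, by rw [hXY]; ring⟩
  have hρ1 : ρ = 1 := by
    rcases hρ with r | r
    · exact r
    · exfalso
      subst r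
      have d3 : (ce X Y j').1 ^ 2 * X = (4 ^ j') ^ 2 * b ^ y' := by linarith
      have hXb := dvd_pow_of _ _ _ _ _ hXo d3
      have hc : IsCoprime a (b ^ y') := hcop.pow_right
      have := hc.isUnit_of_dvd' dvd_rfl (haX.trans hXb)
      rw [Int.isUnit_iff] at this
      omega
  subst hρ1
  have d1' : (ce X Y j').1 ^ 2 * X = (4 ^ j') ^ 2 * a ^ x' := by linarith
  have d2' : (ce X Y j').2 ^ 2 * Y = (4 ^ j') ^ 2 * b ^ y' := by linarith
  have hpa : ∀ p : ℕ, p.Prime → (p:ℤ) ∣ a → (p:ℤ) ∣ X := fun p _ hd => hd.trans haX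
  have hpb : ∀ p : ℕ, p.Prime → (p:ℤ) ∣ b → (p:ℤ) ∣ Y := fun p _ hd => hd.trans hbY
  have k1 : 1 ≤ j → _ := fun hj => key_full X Y ω j hω hXo hX0 hY0 hcXY hsum hj
    (good_of a b X Y _ _ _ d1 d2 hpa hpb)
  have k2 : 1 ≤ j' → _ := fun hj => key_full X Y ω j' hω hXo hX0 hY0 hcXY hsum hj
    (good_of a b X Y _ _ _ d1' d2' hpa hpb)
  by_cases hjj : j = 0 ∧ j' = 0
  · obtain ⟨rfl, rfl⟩ := hjj
    left
    simp only [ce_zero] at d1 d2 d1' d2'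
    constructor <;> linarith
  right
  have hexc : (((X = 3 ∧ Y = 5) ∨ (X = 5 ∧ Y = 3)) ∧ ω = 1 ∧ j ≤ 2) ∨
      (((X = 3 ∧ Y = 13) ∨ (X = 13 ∧ Y = 3)) ∧ ω = 2 ∧ j ≤ 1) := by
    by_cases hj : 1 ≤ j
    · rcases k1 hj with ⟨q1, q2, q3⟩ | ⟨q1, q2, q3⟩
      · exact Or.inl ⟨q1, q2, by omega⟩
      · exact Or.inr ⟨q1, q2, by omega⟩
    · rcases k2 (by omega) with ⟨q1, q2, q3⟩ | ⟨q1, q2, q3⟩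
      · exact Or.inl ⟨q1, q2, by omega⟩
      · exact Or.inr ⟨q1, q2, by omega⟩
  have P3 : Prime (3:ℤ) := by norm_num
  have P5 : Prime (5:ℤ) := by norm_num
  have P13 : Prime (13:ℤ) := by norm_num
  rcases hexc with ⟨q1, rfl, q3⟩ | ⟨q1, rfl, q3⟩
  · left
    refine ⟨?_, by omega⟩
    rcases q1 with ⟨q, q'⟩ | ⟨q, q'⟩
    · exact Or.inl ⟨eq_of_dvd_prime _ _ _ ha1 P3 (by norm_num) haX q,
        eq_of_dvd_prime _ _ _ hb1 P5 (by norm_num) hbY q'⟩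
    · exact Or.inr ⟨eq_of_dvd_prime _ _ _ ha1 P5 (by norm_num) haX q,
        eq_of_dvd_prime _ _ _ hb1 P3 (by norm_num) hbY q'⟩
  · right
    refine ⟨?_, by omega⟩
    rcases q1 with ⟨q, q'⟩ | ⟨q, q'⟩
    · exact Or.inl ⟨eq_of_dvd_prime _ _ _ ha1 P3 (by norm_num) haX q,
        eq_of_dvd_prime _ _ _ hb1 P13 (by norm_num) hbY q'⟩
    · exact Or.inr ⟨eq_of_dvd_prime _ _ _ ha1 P13 (by norm_num) haX q,
        eq_of_dvd_prime _ _ _ hb1 P3 (by norm_num) hbY q'⟩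

theorem OO (a b : ℕ) (hab : Nat.Coprime a b) (ha : Odd a) (hb : Odd b) (ha1 : 1 < a) (hb1 : 1 < b)
    (i k z i' k' z' : ℕ) (hz : 3 ≤ z) (hz' : 3 ≤ z')
    (h : a ^ (2 * i + 1) + b ^ (2 * k + 1) = 2 ^ z)
    (h' : a ^ (2 * i' + 1) + b ^ (2 * k' + 1) = 2 ^ z') :
    (i = i' ∧ k = k') ∨
    (((a = 3 ∧ b = 5) ∨ (a = 5 ∧ b = 3)) ∧ (z = 3 ∨ z = 5 ∨ z = 7)) ∨
    (((a = 3 ∧ b = 13) ∨ (a = 13 ∧ b = 3)) ∧ (z = 4 ∨ z = 8)) := by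
  obtain ⟨U, v, hU, hs⟩ := oo_sol a b i k z ha hb hz h
  obtain ⟨U', v', hU', hs'⟩ := oo_sol a b i' k' z' ha hb hz' h'
  have hD := hs.D_mod (by omega)
  have hbo : Odd (b:ℤ) := by exact_mod_cast hb
  have hao : Odd (a:ℤ) := by exact_mod_cast ha
  have ha1Z : (1:ℤ) < a := by exact_mod_cast ha1
  have hb1Z : (1:ℤ) < b := by exact_mod_cast hb1
  have hDpos : (0:ℤ) < a * b := by positivity
  have hcopZ : IsCoprime (a:ℤ) (b:ℤ) := Nat.isCoprime_iff_coprime.mpr hab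
  obtain ⟨u0, v0, w0, m, n, σ, τ, h0, hw0, hm, hn, hmn, e1, e2, hσ, hτ, p1, p2⟩ :=
    euclid (a * b) (hao.mul hbo) (by omega) _ _ _ _ _ _ _ le_rfl (by omega) (by omega) hs hs'
  obtain ⟨r1, -⟩ := zs_extract _ _ _ _ _ _ _ p1
  obtain ⟨r2, -⟩ := zs_extract _ _ _ _ _ _ _ p2
  have hZ : (a:ℤ) ^ (2 * i + 1) + (b:ℤ) ^ (2 * k + 1) = 2 ^ z := by exact_mod_cast h
  have hZ' : (a:ℤ) ^ (2 * i' + 1) + (b:ℤ) ^ (2 * k' + 1) = 2 ^ z' := by exact_mod_cast h'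
  have om := oo_odd a b u0 v0 U σ _ _ z w0 m hcopZ hao hbo ha1Z hb1Z hU (by omega) hZ h0 e1 hσ r1
  have on := oo_odd a b u0 v0 U' τ _ _ z' w0 n hcopZ hao hbo ha1Z hb1Z hU' (by omega) hZ' h0 e2 hτ r2
  have hwe : Even w0 := by
    have : Even (m * w0) := ⟨z - 2, by rw [← e1]; ring⟩
    rcases Nat.even_mul.mp this with q | q
    · exact absurd om (Nat.not_odd_iff_even.mpr q)
    · exact q
  obtain ⟨ω, rfl⟩ := hwe
  rw [← two_mul] at *
  have f1 : z = m * ω + 2 := by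
    have : z - 2 = m * ω := by nlinarith
    omega
  have f2 : z' = n * ω + 2 := by
    have : z' - 2 = n * ω := by nlinarith
    omega
  obtain ⟨j, rfl⟩ := om
  obtain ⟨j', rfl⟩ := on
  have key : ((a:ℤ) ^ (2 * i + 1) = (a:ℤ) ^ (2 * i' + 1) ∧
      (b:ℤ) ^ (2 * k + 1) = (b:ℤ) ^ (2 * k' + 1)) ∨
    ((((a:ℤ) = 3 ∧ (b:ℤ) = 5) ∨ ((a:ℤ) = 5 ∧ (b:ℤ) = 3)) ∧ (z = 3 ∨ z = 5 ∨ z = 7)) ∨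
    ((((a:ℤ) = 3 ∧ (b:ℤ) = 13) ∨ ((a:ℤ) = 13 ∧ (b:ℤ) = 3)) ∧ (z = 4 ∨ z = 8)) := by
    rcases hσ with rfl | rfl
    · exact OO_core a b u0 v0 U U' τ hcopZ ha1Z hb1Z _ _ z _ _ z' ω j j' (by omega) h0 f1 f2
        hU hZ hU' hZ' hao hτ r1 r2
    · have hneg : (⟨-u0, -v0⟩ : ℤ√(-((a:ℤ) * b))) = -⟨u0, v0⟩ := by ext <;> simp
      refine OO_core a b (-u0) (-v0) U U' (-τ) hcopZ ha1Z hb1Z _ _ z _ _ z' ω j j' (by omega)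
        h0.neg f1 f2 hU hZ hU' hZ' hao (by omega) ?_ ?_
      · rw [hneg, Odd.neg_pow ⟨j, rfl⟩, Zsqrtd.re_neg]; linarith
      · rw [hneg, Odd.neg_pow ⟨j', rfl⟩, Zsqrtd.re_neg]; linarith
  rcases key with ⟨g1, g2⟩ | g | g
  · left
    have g1' : a ^ (2 * i + 1) = a ^ (2 * i' + 1) := by exact_mod_cast g1
    have g2' : b ^ (2 * k + 1) = b ^ (2 * k' + 1) := by exact_mod_cast g2
    have q1 := Nat.pow_right_injective (show 2 ≤ a by omega) g1'
    have q2 := Nat.pow_right_injective (show 2 ≤ b by omega) g2'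
    omega
  · right; left; exact_mod_cast g
  · right; right; exact_mod_cast g

theorem z_ge (a b x y z : ℕ) (ha : 3 ≤ a) (hb : 5 ≤ b) (hx : 0 < x) (hy : 0 < y)
    (h : a ^ x + b ^ y = 2 ^ z) : 3 ≤ z := by
  have h1 : a ≤ a ^ x := Nat.le_self_pow (by omega) a
  have h2 : b ≤ b ^ y := Nat.le_self_pow (by omega) b
  by_contra hz
  have : z = 0 ∨ z = 1 ∨ z = 2 := by omega
  rcases this with rfl | rfl | rfl <;> omega

theorem not_ee (a b i k z : ℕ) (ha : Odd a) (hb : Odd b) (hz : 3 ≤ z)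
    (h : a ^ (2 * i) + b ^ (2 * k) = 2 ^ z) : False := by
  have ha' : Odd ((a:ℤ) ^ i) := by exact_mod_cast ha.pow
  have hb' : Odd ((b:ℤ) ^ k) := by exact_mod_cast hb.pow
  have e1 := odd_sq_mod8 _ ha'
  have e2 := odd_sq_mod8 _ hb'
  obtain ⟨n, rfl⟩ : ∃ n, z = n + 3 := ⟨z - 3, by omega⟩
  have hZ : ((a:ℤ) ^ i) ^ 2 + ((b:ℤ) ^ k) ^ 2 = 2 ^ n * 8 := by
    rw [← pow_mul, ← pow_mul, mul_comm i, mul_comm k]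
    have : (a:ℤ) ^ (2 * i) + (b:ℤ) ^ (2 * k) = 2 ^ (n + 3) := by exact_mod_cast h
    rw [this]; ring
  omega

theorem main_two (a b : ℕ) (hab : Nat.Coprime a b) (ha : Odd a) (hb : Odd b)
    (ha1 : 1 < a) (haltb : a < b) (x y z x' y' z' : ℕ)
    (hx : 0 < x) (hy : 0 < y) (h : a ^ x + b ^ y = 2 ^ z)
    (hx' : 0 < x') (hy' : 0 < y') (h' : a ^ x' + b ^ y' = 2 ^ z') :
    (x = x' ∧ y = y' ∧ z = z') ∨
    ((a = 3 ∧ b = 5) ∧ (z = 3 ∨ z = 5 ∨ z = 7)) ∨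
    ((a = 3 ∧ b = 13) ∧ (z = 4 ∨ z = 8)) := by
  have ha3 : 3 ≤ a := by obtain ⟨t, rfl⟩ := ha; omega
  have hb5 : 5 ≤ b := by
    obtain ⟨t, rfl⟩ := ha
    obtain ⟨s, rfl⟩ := hb
    omega
  have hz := z_ge a b x y z ha3 hb5 hx hy h
  have hz' := z_ge a b x' y' z' ha3 hb5 hx' hy' h'
  have ha1Z : (1:ℤ) < a := by exact_mod_cast ha1
  have hb1 : 1 < b := by omega
  have hb1Z : (1:ℤ) < b := by exact_mod_cast hb1
  have haZ : Odd (a:ℤ) := by exact_mod_cast ha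
  have hbZ : Odd (b:ℤ) := by exact_mod_cast hb
  have hZ : (a:ℤ) ^ x + (b:ℤ) ^ y = 2 ^ z := by exact_mod_cast h
  have hZ' : (a:ℤ) ^ x' + (b:ℤ) ^ y' = 2 ^ z' := by exact_mod_cast h'
  have hZs : (b:ℤ) ^ y + (a:ℤ) ^ x = 2 ^ z := by linarith
  have hZs' : (b:ℤ) ^ y' + (a:ℤ) ^ x' = 2 ^ z' := by linarith
  have fin : x = x' → y = y' → (x = x' ∧ y = y' ∧ z = z') := by
    intro p q
    refine ⟨p, q, ?_⟩
    rw [p, q, h'] at h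
    exact (Nat.pow_right_injective (le_refl 2) h).symm
  rcases Nat.even_or_odd x with ex | ox <;> rcases Nat.even_or_odd y with ey | oy
  · exfalso
    obtain ⟨i, rfl⟩ := ex
    obtain ⟨k, rfl⟩ := ey
    exact not_ee a b i k z ha hb hz (by rw [two_mul, two_mul]; exact h)
  · rcases Nat.even_or_odd x' with ex' | ox' <;> rcases Nat.even_or_odd y' with ey' | oy'
    · exfalso
      obtain ⟨i, rfl⟩ := ex'
      obtain ⟨k, rfl⟩ := ey'
      exact not_ee a b i k z' ha hb hz' (by rw [two_mul, two_mul]; exact h')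
    · left
      rw [even_iff_exists_two_mul] at ex ex'
      obtain ⟨i, rfl⟩ := ex
      obtain ⟨k, rfl⟩ := oy
      obtain ⟨i', rfl⟩ := ex'
      obtain ⟨k', rfl⟩ := oy'
      obtain ⟨p, q⟩ := EO a b hab ha hb ha1 hb1 i k z i' k' z' (by omega) (by omega) hz hz' h h'
      exact fin (by omega) (by omega)
    · exact (M2 a b x y z x' y' z' ha1Z hb1Z haZ hbZ ex hx oy hZ ox' ey' hy' hZ').elim
    · exact (M1 a b x y z x' y' z' ha1Z hb1Z haZ hbZ ex hx oy hZ ox' oy' hZ').elim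
  · rcases Nat.even_or_odd x' with ex' | ox' <;> rcases Nat.even_or_odd y' with ey' | oy'
    · exfalso
      obtain ⟨i, rfl⟩ := ex'
      obtain ⟨k, rfl⟩ := ey'
      exact not_ee a b i k z' ha hb hz' (by rw [two_mul, two_mul]; exact h')
    · exact (M2 a b x' y' z' x y z ha1Z hb1Z haZ hbZ ex' hx' oy' hZ' ox ey hy hZ).elim
    · left
      rw [even_iff_exists_two_mul] at ey ey'
      obtain ⟨i, rfl⟩ := ey
      obtain ⟨k, rfl⟩ := ox
      obtain ⟨i', rfl⟩ := ey'
      obtain ⟨k', rfl⟩ := ox'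
      obtain ⟨p, q⟩ := EO b a hab.symm hb ha hb1 ha1 i k z i' k' z' (by omega) (by omega) hz hz'
        (by rw [add_comm]; exact h) (by rw [add_comm]; exact h')
      exact fin (by omega) (by omega)
    · exact (M1 b a y x z y' x' z' hb1Z ha1Z hbZ haZ ey hy ox hZs oy' ox' hZs').elim
  · rcases Nat.even_or_odd x' with ex' | ox' <;> rcases Nat.even_or_odd y' with ey' | oy'
    · exfalso
      obtain ⟨i, rfl⟩ := ex'
      obtain ⟨k, rfl⟩ := ey'
      exact not_ee a b i k z' ha hb hz' (by rw [two_mul, two_mul]; exact h')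
    · exact (M1 a b x' y' z' x y z ha1Z hb1Z haZ hbZ ex' hx' oy' hZ' ox oy hZ).elim
    · exact (M1 b a y' x' z' y x z hb1Z ha1Z hbZ haZ ey' hy' ox' hZs' oy ox hZs).elim
    · obtain ⟨i, rfl⟩ := ox
      obtain ⟨k, rfl⟩ := oy
      obtain ⟨i', rfl⟩ := ox'
      obtain ⟨k', rfl⟩ := oy'
      rcases OO a b hab ha hb ha1 hb1 i k z i' k' z' hz hz' h h' with ⟨p, q⟩ | ⟨q1, q2⟩ | ⟨q1, q2⟩
      · left
        exact fin (by omega) (by omega)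
      · exact Or.inr (Or.inl ⟨by omega, q2⟩)
      · exact Or.inr (Or.inr ⟨by omega, q2⟩)

theorem exp_le (a b x y z n : ℕ) (h : a ^ x + b ^ y = 2 ^ z) (hn : 2 ^ z < a ^ n) (ha : 1 < a) :
    x < n := by
  have : a ^ x < a ^ n := by omega
  exact (Nat.pow_lt_pow_iff_right ha).mp this

theorem fin35 (x y z : ℕ) (hx : 0 < x) (hy : 0 < y) (h : 3 ^ x + 5 ^ y = 2 ^ z)
    (hz : z = 3 ∨ z = 5 ∨ z = 7) :
    (x, y, z) = (1, 1, 3) ∨ (x, y, z) = (3, 1, 5) ∨ (x, y, z) = (1, 3, 7) := by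
  have h1 : x < 5 := exp_le 3 5 x y z 5 h
    (by rcases hz with rfl | rfl | rfl <;> norm_num) (by norm_num)
  have h2 : y < 4 := exp_le 5 3 y x z 4 (by rw [add_comm]; exact h)
    (by rcases hz with rfl | rfl | rfl <;> norm_num) (by norm_num)
  rcases hz with rfl | rfl | rfl <;> interval_cases x <;> interval_cases y <;> simp_all

theorem fin313 (x y z : ℕ) (hx : 0 < x) (hy : 0 < y) (h : 3 ^ x + 13 ^ y = 2 ^ z)
    (hz : z = 4 ∨ z = 8) :
    (x, y, z) = (1, 1, 4) ∨ (x, y, z) = (5, 1, 8) := by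
  have h1 : x < 6 := exp_le 3 13 x y z 6 h
    (by rcases hz with rfl | rfl <;> norm_num) (by norm_num)
  have h2 : y < 3 := exp_le 13 3 y x z 3 (by rw [add_comm]; exact h)
    (by rcases hz with rfl | rfl <;> norm_num) (by norm_num)
  rcases hz with rfl | rfl <;> interval_cases x <;> interval_cases y <;> simp_all


/-- Lemma 2.7: for coprime odd `1 < a < b`, the equation `a^x + b^y = 2^z` has at
most one solution in positive integers, except that `(a,b) = (3,5)` has exactly
three solutions and `(a,b) = (3,13)` has exactly two. -/
theorem stmt_12 (a b : ℕ) (hab : Nat.Coprime a b) (haodd : Odd a) (hbodd : Odd b)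
    (ha1 : 1 < a) (haltb : a < b) :
    (¬((a, b) = (3, 5) ∨ (a, b) = (3, 13)) →
      ∀ s t : ℕ × ℕ × ℕ,
        (0 < s.1 ∧ 0 < s.2.1 ∧ 0 < s.2.2 ∧ a ^ s.1 + b ^ s.2.1 = 2 ^ s.2.2) →
        (0 < t.1 ∧ 0 < t.2.1 ∧ 0 < t.2.2 ∧ a ^ t.1 + b ^ t.2.1 = 2 ^ t.2.2) →
        s = t) ∧
    ((a, b) = (3, 5) →
      ∃ s₁ s₂ s₃ : ℕ × ℕ × ℕ, s₁ ≠ s₂ ∧ s₁ ≠ s₃ ∧ s₂ ≠ s₃ ∧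
        (0 < s₁.1 ∧ 0 < s₁.2.1 ∧ 0 < s₁.2.2 ∧ a ^ s₁.1 + b ^ s₁.2.1 = 2 ^ s₁.2.2) ∧
        (0 < s₂.1 ∧ 0 < s₂.2.1 ∧ 0 < s₂.2.2 ∧ a ^ s₂.1 + b ^ s₂.2.1 = 2 ^ s₂.2.2) ∧
        (0 < s₃.1 ∧ 0 < s₃.2.1 ∧ 0 < s₃.2.2 ∧ a ^ s₃.1 + b ^ s₃.2.1 = 2 ^ s₃.2.2) ∧
        (∀ s : ℕ × ℕ × ℕ,
          (0 < s.1 ∧ 0 < s.2.1 ∧ 0 < s.2.2 ∧ a ^ s.1 + b ^ s.2.1 = 2 ^ s.2.2) →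
          s = s₁ ∨ s = s₂ ∨ s = s₃)) ∧
    ((a, b) = (3, 13) →
      ∃ s₁ s₂ : ℕ × ℕ × ℕ, s₁ ≠ s₂ ∧
        (0 < s₁.1 ∧ 0 < s₁.2.1 ∧ 0 < s₁.2.2 ∧ a ^ s₁.1 + b ^ s₁.2.1 = 2 ^ s₁.2.2) ∧
        (0 < s₂.1 ∧ 0 < s₂.2.1 ∧ 0 < s₂.2.2 ∧ a ^ s₂.1 + b ^ s₂.2.1 = 2 ^ s₂.2.2) ∧
        (∀ s : ℕ × ℕ × ℕ,
          (0 < s.1 ∧ 0 < s.2.1 ∧ 0 < s.2.2 ∧ a ^ s.1 + b ^ s.2.1 = 2 ^ s.2.2) →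
          s = s₁ ∨ s = s₂)) := by
  refine ⟨?_, ?_, ?_⟩
  · rintro hne ⟨x, y, z⟩ ⟨x', y', z'⟩ ⟨hx, hy, -, h⟩ ⟨hx', hy', -, h'⟩
    rcases main_two a b hab haodd hbodd ha1 haltb x y z x' y' z' hx hy h hx' hy' h' with
      ⟨p, q, r⟩ | ⟨⟨p, q⟩, -⟩ | ⟨⟨p, q⟩, -⟩
    · rw [p, q, r]
    · exact absurd (Or.inl (by rw [p, q])) hne
    · exact absurd (Or.inr (by rw [p, q])) hne
  · intro hh
    obtain ⟨rfl, rfl⟩ := Prod.mk.inj hh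
    refine ⟨(1, 1, 3), (3, 1, 5), (1, 3, 7), by decide, by decide, by decide, by norm_num,
      by norm_num, by norm_num, ?_⟩
    rintro ⟨x, y, z⟩ ⟨hx, hy, -, h⟩
    rcases main_two 3 5 hab haodd hbodd ha1 haltb x y z 1 1 3 hx hy h (by norm_num) (by norm_num)
      (by norm_num) with ⟨p, q, r⟩ | ⟨-, q⟩ | ⟨⟨-, q⟩, -⟩
    · left; rw [p, q, r]
    · exact fin35 x y z hx hy h q
    · omega
  · intro hh
    obtain ⟨rfl, rfl⟩ := Prod.mk.inj hh
    refine ⟨(1, 1, 4), (5, 1, 8), by decide, by norm_num, by norm_num, ?_⟩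
    rintro ⟨x, y, z⟩ ⟨hx, hy, -, h⟩
    rcases main_two 3 13 hab haodd hbodd ha1 haltb x y z 1 1 4 hx hy h (by norm_num) (by norm_num)
      (by norm_num) with ⟨p, q, r⟩ | ⟨⟨-, q⟩, -⟩ | ⟨-, q⟩
    · left; rw [p, q, r]
    · omega
    · exact fin313 x y z hx hy h q
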